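/- arXiv:2003.10069 — 3 statements merged into one kernel-verified Lean document; each statement's English description precedes it below -/
import Mathlib

section
/- There is an absolute constant C > 0 such that the following holds. Let d ≥ 10 and T ≥ 1. Let σ₁, …, σ_T be i.i.d. uniformly random transpositions in the symmetric group S_d, and let ξ₁, …, ξ_T be i.i.d. Bernoulli(1/2) random variables independent of everything. For a fixed sequence σ = (σ₁,…,σ_T), let μ_σ denote the law (over the randomness of the ξ_i) of the product P_σ = σ₁^{ξ₁} ⋯ σ_T^{ξ_T}. Then E_σ[ TV(μ_σ, Unif_{S_d}) ] ≤ C ( d^{1/2} e^{−T/(6d)} + (d!)^{1/2} ((√5 − 1)/2)^{T/2} ), where TV denotes total variation distance and Unif_{S_d} is the uniform distribution on S_d. -/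
noncomputable section

open scoped Classical

namespace KacJL

/-- The product `σ₁^{ξ₁} ⋯ σ_T^{ξ_T}`. -/
def permProd {d T : ℕ} (σ : Fin T → Equiv.Perm (Fin d)) (ξ : Fin T → Bool) :
    Equiv.Perm (Fin d) :=
  (List.ofFn fun t => if ξ t then σ t else 1).prod

/-- For a fixed sequence `σ` of permutations, the probability that
`σ₁^{ξ₁} ⋯ σ_T^{ξ_T} = τ` over i.i.d. Bernoulli(1/2) exponents `ξ`. -/
def permProdPMF {d T : ℕ} (σ : Fin T → Equiv.Perm (Fin d)) (τ : Equiv.Perm (Fin d)) : ℝ :=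
  ((Finset.univ.filter fun ξ : Fin T → Bool => permProd σ ξ = τ).card : ℝ) / 2 ^ T

/-- The total variation distance (in the normalization `TV(μ,ν) = ∑ x |μ(x) - ν(x)|`)
between the law of `σ₁^{ξ₁} ⋯ σ_T^{ξ_T}` and the uniform distribution on `S_d`. -/
def tvToUniform {d T : ℕ} (σ : Fin T → Equiv.Perm (Fin d)) : ℝ :=
  ∑ τ : Equiv.Perm (Fin d), |permProdPMF σ τ - ((d.factorial : ℝ))⁻¹|

/-- The expectation over i.i.d. uniformly random transpositions `σ₁, …, σ_T` of the total
variation distance `TV(μ_σ, Unif_{S_d})`. -/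
def avgTV (d T : ℕ) : ℝ :=
  (∑ σ : Fin T → {τ : Equiv.Perm (Fin d) // τ.IsSwap},
      tvToUniform fun t => (σ t : Equiv.Perm (Fin d))) /
    (Fintype.card {τ : Equiv.Perm (Fin d) // τ.IsSwap}) ^ T

/-!
The law of `σ₁ ^ ξ₁ ⋯ σ_T ^ ξ_T` acts on the regular representation as a product of lazy steps
`(1 + σ_t) / 2`. Filter a representation by the common kernels `K_n` of the symmetrizers of all
`n`-element sets of letters; `K_n` collects the Young diagrams with first row shorter than `n`.

* On `K_(L+1)` every eigenvalue of the sum of all transpositions is bounded by peeling off rows: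
  the largest set `A` whose symmetrizer does not kill an eigenvector plays the role of the first
  row, and the symmetrized vector is an eigenvector for the letters outside `A`. Averaged over a
  random transposition, a lazy step on `K_(d-k+1)` therefore contracts square norms by
  `exp (-r / d)`, where `r` is `3k/4` for `k ≤ d/4` and `k/2` otherwise.
* In the regular representation, the orthogonal complement of `K_l` is spanned by ranges of
  symmetrizers and has dimension at most `choose d l * d! / l!`. By invariance under right
  translations it carries at most a fraction `choose d l / l!` of the square norm of a point mass.
* The complement of `K_d` consists of the constants, so Cauchy–Schwarz bounds the total variation
  by the norm of the projection to `K_d`. Summing the two estimates over the layers of the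
  filtration gives `O(d * exp (-T / (3d)))` for the mean square once `T ≥ 3 d log d`, and for
  smaller `T` the asserted bound exceeds the trivial one.
-/

open Equiv Finset
open scoped BigOperators

section Symmetrizer

variable {α k V : Type*} [DecidableEq α] [CommRing k] [AddCommGroup V] [Module k V]

theorem sum_permsOfFinset_cons {M : Type*} [AddCommMonoid M] (f : Perm α → M) (j : α)
    (A : Finset α) (hj : j ∉ A) :
    ∑ s ∈ permsOfFinset (cons j A hj), f s =
      ∑ s ∈ permsOfFinset A, f s + ∑ i ∈ A, ∑ s ∈ permsOfFinset A, f (swap i j * s) := by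
  obtain ⟨⟨l⟩, hl⟩ := A
  change ((permsOfList (j :: l)).map f).sum = ((permsOfList l).map f).sum +
    (l.map fun i ↦ ((permsOfList l).map fun s ↦ f (swap i j * s)).sum).sum
  simp [permsOfList, List.flatMap, List.sum_flatten, Function.comp_def, swap_comm]

theorem mem_permsOfFinset_iff_forall_notMem {A : Finset α} {s : Perm α} :
    s ∈ permsOfFinset A ↔ ∀ i ∉ A, s i = i := by
  simp only [mem_perms_of_finset_iff, ne_eq, not_imp_comm]

theorem swap_mem_permsOfFinset {A : Finset α} {i j : α} (hi : i ∈ A) (hj : j ∈ A) :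
    swap i j ∈ permsOfFinset A :=
  mem_permsOfFinset_iff_forall_notMem.2 fun _ hx ↦
    swap_apply_of_ne_of_ne (ne_of_mem_of_not_mem hi hx).symm (ne_of_mem_of_not_mem hj hx).symm

theorem mul_mem_permsOfFinset_iff {A : Finset α} {s t : Perm α} (ht : t ∈ permsOfFinset A) :
    t * s ∈ permsOfFinset A ↔ s ∈ permsOfFinset A := by
  rw [mem_permsOfFinset_iff_forall_notMem] at *
  simp only [mem_permsOfFinset_iff_forall_notMem, Perm.mul_apply]
  refine forall₂_congr fun i hi ↦ ?_
  conv_rhs => rw [← t.apply_eq_iff_eq, ht i hi]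

theorem conj_mem_permsOfFinset_map_iff {A : Finset α} {s t : Perm α} :
    t * s * t⁻¹ ∈ permsOfFinset (A.map t.toEmbedding) ↔ s ∈ permsOfFinset A := by
  simp only [mem_permsOfFinset_iff_forall_notMem]
  rw [← t.forall_congr_right]
  simp

/-- The unnormalized Young symmetrizer of the one-row shape on the letters of `A`: the sum of the
operators `ρ s` over all permutations `s` supported in `A`. -/
def symmetrizer (ρ : Representation k (Perm α) V) (A : Finset α) : Module.End k V :=
  ∑ s ∈ permsOfFinset A, ρ s

/-- The sum of the operators `ρ (swap i j)` over all ordered pairs of letters of `N`. Each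
transposition is counted twice, and each of the `#N` diagonal pairs contributes the identity. -/
def transpositionSum (ρ : Representation k (Perm α) V) (N : Finset α) : Module.End k V :=
  ∑ i ∈ N, ∑ j ∈ N, ρ (swap i j)

variable (ρ : Representation k (Perm α) V)

@[simp]
theorem symmetrizer_empty : symmetrizer ρ ∅ = 1 := by
  have : permsOfFinset (∅ : Finset α) = {1} := rfl
  simp [symmetrizer, this]

theorem symmetrizer_insert {A : Finset α} {j : α} (hj : j ∉ A) :
    symmetrizer ρ (insert j A) =
      symmetrizer ρ A + ∑ i ∈ A, ρ (swap i j) * symmetrizer ρ A := by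
  rw [← cons_eq_insert j A hj]
  simp only [symmetrizer, sum_permsOfFinset_cons, map_mul, mul_sum]

@[simp]
theorem symmetrizer_singleton (i : α) : symmetrizer ρ {i} = 1 := by
  simpa using symmetrizer_insert ρ (notMem_empty i)

theorem monotone_ker_symmetrizer : Monotone fun A ↦ LinearMap.ker (symmetrizer ρ A) := by
  rw [monotone_iff_forall_covBy]
  intro A B hAB f hf
  obtain ⟨j, hj, rfl⟩ := covBy_iff_exists_insert.1 hAB
  simp_all [symmetrizer_insert ρ hj]

theorem map_mul_symmetrizer {A : Finset α} {t : Perm α} (ht : t ∈ permsOfFinset A) :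
    ρ t * symmetrizer ρ A = symmetrizer ρ A := by
  simp only [symmetrizer, mul_sum, ← map_mul]
  exact sum_equiv (Equiv.mulLeft t) (fun s ↦ (mul_mem_permsOfFinset_iff ht).symm) fun _ _ ↦ rfl

theorem symmetrizer_mul_self (A : Finset α) :
    symmetrizer ρ A * symmetrizer ρ A = ((#A).factorial : k) • symmetrizer ρ A := by
  conv_lhs => enter [1]; rw [symmetrizer]
  rw [sum_mul, sum_congr rfl fun _ ↦ map_mul_symmetrizer ρ, sum_const, card_perms_of_finset,
    Nat.cast_smul_eq_nsmul]

theorem symmetrizer_map_mul (A : Finset α) (t : Perm α) :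
    symmetrizer ρ (A.map t.toEmbedding) * ρ t = ρ t * symmetrizer ρ A := by
  simp only [symmetrizer, sum_mul, mul_sum, ← map_mul]
  exact (sum_equiv (MulAut.conj t).toEquiv (fun s ↦ conj_mem_permsOfFinset_map_iff.symm)
    fun s _ ↦ by simp).symm

theorem commute_symmetrizer_of_disjoint {A B : Finset α} (h : Disjoint A B) :
    Commute (symmetrizer ρ A) (symmetrizer ρ B) := by
  refine Commute.sum_left _ _ _ fun s hs ↦ Commute.sum_right _ _ _ fun t ht ↦ ?_
  rw [mem_permsOfFinset_iff_forall_notMem] at hs ht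
  have hst : s.Disjoint t := fun x ↦
    (em (x ∈ A)).symm.imp (hs x) fun hx ↦ ht x (disjoint_left.1 h hx)
  exact hst.commute.map ρ

theorem commute_transpositionSum_map {N : Finset α} {t : Perm α} (ht : t ∈ permsOfFinset N) :
    Commute (transpositionSum ρ N) (ρ t) := by
  have hN : {i | t i ≠ i} ⊆ (N : Set α) := fun i hi ↦ mem_perms_of_finset_iff.1 ht hi
  symm
  simp only [Commute, SemiconjBy, transpositionSum, sum_mul, mul_sum, ← map_mul,
    mul_swap_eq_swap_mul]
  rw [t.sum_comp N (fun i ↦ ∑ j ∈ N, ρ (swap i (t j) * t)) hN]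
  exact sum_congr rfl fun i _ ↦ t.sum_comp N (fun j ↦ ρ (swap i j * t)) hN

theorem commute_transpositionSum_symmetrizer {A N : Finset α} (h : A ⊆ N) :
    Commute (transpositionSum ρ N) (symmetrizer ρ A) :=
  Commute.sum_right _ _ _ fun _ hs ↦ commute_transpositionSum_map ρ <|
    mem_perms_of_finset_iff.2 fun hx ↦ h (mem_perms_of_finset_iff.1 hs hx)

theorem sum_swap_symmetrizer_apply {A : Finset α} {j : α} (hj : j ∉ A) {f : V}
    (hf : symmetrizer ρ (insert j A) f = 0) :
    ∑ i ∈ A, ρ (swap i j) (symmetrizer ρ A f) = -symmetrizer ρ A f := by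
  rw [symmetrizer_insert ρ hj] at hf
  rw [eq_neg_iff_add_eq_zero, add_comm]
  simpa using hf

theorem transpositionSum_symmetrizer_apply {A N : Finset α} (h : A ⊆ N) {f : V}
    (hf : ∀ j ∈ N \ A, symmetrizer ρ (insert j A) f = 0) :
    transpositionSum ρ N (symmetrizer ρ A f) =
      ((#A : k) ^ 2 - 2 * #(N \ A)) • symmetrizer ρ A f +
        transpositionSum ρ (N \ A) (symmetrizer ρ A f) := by
  set g := symmetrizer ρ A f with hg
  have inside : ∑ i ∈ A, ∑ j ∈ A, ρ (swap i j) g = ((#A : k) ^ 2) • g := by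
    have hfix : ∀ i ∈ A, ∀ j ∈ A, ρ (swap i j) g = g := fun i hi j hj ↦
      LinearMap.congr_fun (map_mul_symmetrizer ρ (swap_mem_permsOfFinset hi hj)) f
    rw [sum_congr rfl fun i hi ↦ sum_congr rfl (hfix i hi)]
    simp only [sum_const, ← Nat.cast_smul_eq_nsmul k, smul_smul, sq]
  have across : ∑ j ∈ N \ A, ∑ i ∈ A, ρ (swap i j) g = -(#(N \ A) : k) • g := by
    rw [sum_congr rfl fun j hj ↦ sum_swap_symmetrizer_apply ρ (mem_sdiff.1 hj).2 (hf j hj)]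
    simp [← Nat.cast_smul_eq_nsmul k, hg]
  have across' : ∑ i ∈ N \ A, ∑ j ∈ A, ρ (swap i j) g = -(#(N \ A) : k) • g := by
    simpa only [swap_comm] using across
  rw [sum_comm] at across
  simp only [transpositionSum, LinearMap.sum_apply]
  simp only [← sum_sdiff h, sum_add_distrib, inside, across, across']
  module

end Symmetrizer

section SymmetrizerKernel

variable {α k V : Type*} [DecidableEq α]

section CommRing

variable [CommRing k] [AddCommGroup V] [Module k V] (ρ : Representation k (Perm α) V)

/-- The vectors killed by the symmetrizers of all `n`-element subsets of `N`. When
`n ≤ #N` this is the sum of the isotypic components, for the permutations of `N`, whose Young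
diagrams have first row of length less than `n`; for `n > #N` there is no condition. -/
def symmetrizerKernel (N : Finset α) (n : ℕ) : Submodule k V :=
  ⨅ A ∈ N.powersetCard n, LinearMap.ker (symmetrizer ρ A)

variable {ρ} in
theorem mem_symmetrizerKernel {N : Finset α} {n : ℕ} {f : V} :
    f ∈ symmetrizerKernel ρ N n ↔ ∀ A ⊆ N, #A = n → symmetrizer ρ A f = 0 := by
  simp [symmetrizerKernel, mem_powersetCard]

theorem symmetrizerKernel_zero (N : Finset α) : symmetrizerKernel ρ N 0 = ⊥ := by
  simp [symmetrizerKernel, Module.End.one_eq_id]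

theorem monotone_symmetrizerKernel (N : Finset α) : Monotone (symmetrizerKernel ρ N) := by
  intro m n hmn f hf
  rw [mem_symmetrizerKernel] at *
  intro A hAN hA
  obtain ⟨B, hBA, hB⟩ := exists_subset_card_eq (hmn.trans hA.ge)
  exact monotone_ker_symmetrizer ρ hBA (hf B (hBA.trans hAN) hB)

theorem map_mem_symmetrizerKernel_univ [Fintype α] {n : ℕ} (t : Perm α) {f : V}
    (hf : f ∈ symmetrizerKernel ρ univ n) : ρ t f ∈ symmetrizerKernel ρ univ n := by
  rw [mem_symmetrizerKernel] at *
  intro A _ hA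
  have h := LinearMap.congr_fun (symmetrizer_map_mul ρ (A.map t⁻¹.toEmbedding) t) f
  have hmap : (A.map t⁻¹.toEmbedding).map t.toEmbedding = A := by
    ext; simp [Perm.inv_def]
  rw [hmap] at h
  simpa [hf (A.map t⁻¹.toEmbedding) (subset_univ _) (by simpa using hA)] using h

variable {ρ} in
/-- One step of row peeling: `A` is the largest set whose symmetrizer does not kill `f`, so that it
plays the role of the first row of a Young diagram. -/
theorem exists_hasEigenvector_sdiff {N : Finset α} (hN : N.Nonempty) {L : ℕ} {c : k} {f : V}
    (hf : f ∈ symmetrizerKernel ρ N (L + 1))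
    (hc : Module.End.HasEigenvector (transpositionSum ρ N) c f) :
    ∃ A ⊆ N, 1 ≤ #A ∧ #A ≤ L ∧ ∃ g ∈ symmetrizerKernel ρ (N \ A) (#A + 1),
      Module.End.HasEigenvector (transpositionSum ρ (N \ A)) (c - #A ^ 2 + 2 * #(N \ A)) g := by
  classical
  obtain ⟨i, hi⟩ := hN
  obtain ⟨A, hA, hmax⟩ := exists_max_image {A ∈ N.powerset | symmetrizer ρ A f ≠ 0} card
    ⟨{i}, by simpa [hi] using hc.2⟩
  obtain ⟨hAN, hAf⟩ : A ⊆ N ∧ symmetrizer ρ A f ≠ 0 := by simpa using hA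
  have hlarge : ∀ B ⊆ N, #A < #B → symmetrizer ρ B f = 0 := fun B hBN hAB ↦
    by_contra fun hBf ↦ (hmax B (by simp [hBN, hBf])).not_gt hAB
  refine ⟨A, hAN, by simpa using hmax {i} (by simpa [hi] using hc.2), ?_,
    symmetrizer ρ A f, ?_, ?_, hAf⟩
  · by_contra! hLA
    obtain ⟨B, hBA, hB⟩ := exists_subset_card_eq (Nat.succ_le_of_lt hLA)
    exact hAf (monotone_ker_symmetrizer ρ hBA (mem_symmetrizerKernel.1 hf B (hBA.trans hAN) hB))
  · refine mem_symmetrizerKernel.2 fun B hB hcard ↦ ?_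
    have hdisj : Disjoint B A := disjoint_of_subset_left hB sdiff_disjoint
    rw [← Module.End.mul_apply, (commute_symmetrizer_of_disjoint ρ hdisj).eq,
      Module.End.mul_apply, hlarge B (hB.trans sdiff_subset) (by omega), map_zero]
  · have hsplit := transpositionSum_symmetrizer_apply ρ hAN fun j hj ↦ by
      rw [mem_sdiff] at hj
      exact hlarge _ (insert_subset hj.1 hAN) (by rw [card_insert_of_notMem hj.2]; omega)
    rw [← Module.End.mul_apply, (commute_transpositionSum_symmetrizer ρ hAN).eq,
      Module.End.mul_apply, hc.apply_eq_smul, map_smul, ← sub_eq_iff_eq_add'] at hsplit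
    rw [Module.End.mem_eigenspace_iff, ← hsplit]
    module

end CommRing

section OrderedField

variable [Field k] [LinearOrder k] [IsStrictOrderedRing k] [AddCommGroup V] [Module k V]
  {ρ : Representation k (Perm α) V}

theorem eigenvalue_transpositionSum_le_mul {N : Finset α} {L : ℕ} {c : k} {f : V}
    (hf : f ∈ symmetrizerKernel ρ N (L + 1))
    (hc : Module.End.HasEigenvector (transpositionSum ρ N) c f) : c ≤ #N * L := by
  induction N using Finset.strongInduction generalizing L c f with
  | H N ih =>
    obtain rfl | hN := N.eq_empty_or_nonempty
    · have : c • f = 0 := by simpa [transpositionSum] using hc.apply_eq_smul.symm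
      simp [(smul_eq_zero.1 this).resolve_right hc.2]
    obtain ⟨A, hAN, hA, hAL, g, hg, hcg⟩ := exists_hasEigenvector_sdiff hN hf hc
    have hrest : c - #A ^ 2 + 2 * #(N \ A) ≤ #(N \ A) * #A :=
      ih (N \ A) (sdiff_ssubset hAN (card_pos.1 hA)) hg hcg
    have hcard : (#(N \ A) : k) + #A = #N := by
      exact_mod_cast card_sdiff_add_card_eq_card hAN
    calc c ≤ #(N \ A) * #A + #A ^ 2 - 2 * #(N \ A) := by linarith
      _ ≤ #(N \ A) * #A + #A ^ 2 := sub_le_self _ (by positivity)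
      _ = #N * #A := by rw [← hcard]; ring
      _ ≤ #N * L := by gcongr

theorem eigenvalue_transpositionSum_le_sq {N : Finset α} {c : k} {f : V}
    (hc : Module.End.HasEigenvector (transpositionSum ρ N) c f) : c ≤ #N ^ 2 := by
  rw [sq]
  refine eigenvalue_transpositionSum_le_mul (mem_symmetrizerKernel.2 fun A hA hcard ↦ ?_) hc
  have := card_le_card hA
  omega

/-- The bound is attained by the Young diagram with rows `L` and `m`. -/
theorem eigenvalue_transpositionSum_le_of_le {N : Finset α} {m L : ℕ} (hN : m + L = #N)
    (hmL : m ≤ L) {c : k} {f : V} (hf : f ∈ symmetrizerKernel ρ N (L + 1))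
    (hc : Module.End.HasEigenvector (transpositionSum ρ N) c f) :
    c ≤ #N ^ 2 - 2 * m * (L + 1) := by
  obtain rfl | hne := N.eq_empty_or_nonempty
  · obtain ⟨rfl, rfl⟩ : m = 0 ∧ L = 0 := by simpa using hN
    simpa using eigenvalue_transpositionSum_le_sq hc
  obtain ⟨A, hAN, -, hAL, g, hg, hcg⟩ := exists_hasEigenvector_sdiff hne hf hc
  have hmul := eigenvalue_transpositionSum_le_mul hg hcg
  have hsq := eigenvalue_transpositionSum_le_sq hcg
  have hcard : (#(N \ A) : k) + #A = #N := by
    exact_mod_cast card_sdiff_add_card_eq_card hAN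
  have hmL' : (m : k) ≤ L := by exact_mod_cast hmL
  have hAL' : (#A : k) ≤ L := by exact_mod_cast hAL
  have hN' : (m : k) + L = #N := by exact_mod_cast hN
  have hp : (0 : k) ≤ #(N \ A) := by positivity
  have hq : (0 : k) ≤ #A := by positivity
  generalize (#(N \ A) : k) = p at *
  generalize (#A : k) = q at *
  rw [← hcard] at hN' ⊢
  obtain hpq | hqp := le_total p q
  · have : 0 ≤ (p - m) * (q - m + 1) := mul_nonneg (by linarith) (by linarith)
    calc c ≤ (p + q) ^ 2 - 2 * (p * (q + 1)) := by linarith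
      _ = (p + q) ^ 2 - 2 * m * (p + q - m + 1) - 2 * ((p - m) * (q - m + 1)) := by ring
      _ ≤ (p + q) ^ 2 - 2 * m * (L + 1) := by rw [← hN']; linarith
  · have hbalanced : 0 ≤ (p + q) * (p - q) := mul_nonneg (by linarith) (by linarith)
    have hrows : (p + q) ^ 2 ≤ 2 * (L ^ 2 + m ^ 2) := by
      rw [← hN']
      linarith [sq_nonneg ((L : k) - m)]
    calc c ≤ (p + q) * q - 2 * p := by linarith
      _ ≤ (p + q) ^ 2 / 2 - (p + q) := by linarith
      _ ≤ L ^ 2 + m ^ 2 - 2 * m := by linarith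
      _ = (p + q) ^ 2 - 2 * m * (L + 1) := by rw [← hN']; ring

end OrderedField

/-- The exponential rate, in units of `1 / d`, at which a lazy step of the random transposition walk
on `d` letters contracts the components whose Young diagrams have at least `k` boxes below the first
row. -/
def decayRate (d k : ℕ) : ℝ :=
  if 4 * k ≤ d then 3 / 4 * k else k / 2

theorem eigenvalue_transpositionSum_univ_le [Fintype α] [AddCommGroup V] [Module ℝ V]
    {ρ : Representation ℝ (Perm α) V} {d m L : ℕ} (hd : Fintype.card α = d) (hmL : m + L = d)
    {c : ℝ} {f : V} (hf : f ∈ symmetrizerKernel ρ univ (L + 1))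
    (hc : Module.End.HasEigenvector (transpositionSum ρ univ) c f) :
    c ≤ d ^ 2 - 2 * decayRate d m * (d - 1) := by
  have hd' : (m : ℝ) + L = d := by exact_mod_cast hmL
  rw [decayRate]
  split_ifs with h
  · have := eigenvalue_transpositionSum_le_of_le (m := m) (by simp [hd, hmL]) (by omega) hf hc
    rw [card_univ, hd] at this
    have h' : (4 : ℝ) * m ≤ d := by exact_mod_cast h
    nlinarith
  · have := eigenvalue_transpositionSum_le_mul hf hc
    rw [card_univ, hd] at this
    have : (0 : ℝ) ≤ m := by positivity
    nlinarith

end SymmetrizerKernel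

section Transposition

variable {α : Type*} [DecidableEq α]

/-- The transpositions of `α`. -/
abbrev Transposition (α : Type*) [DecidableEq α] := {τ : Perm α // τ.IsSwap}

instance [Nontrivial α] : Nonempty (Transposition α) :=
  let ⟨i, j, hij⟩ := exists_pair_ne α
  ⟨⟨swap i j, i, j, hij, rfl⟩⟩

theorem swap_apply_self_of_isSwap {τ : Perm α} (hτ : τ.IsSwap) {i : α} (hi : τ i ≠ i) :
    swap i (τ i) = τ := by
  refine (hτ.isCycle.eq_swap_of_apply_apply_eq_self hi ?_).symm
  obtain ⟨x, y, -, rfl⟩ := hτ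
  exact swap_apply_self ..

variable [Fintype α]

theorem sum_offDiag_swap {M : Type*} [AddCommMonoid M] (F : Perm α → M) :
    ∑ p ∈ (univ : Finset α).offDiag, F (swap p.1 p.2) = 2 • ∑ τ : Transposition α, F τ := by
  calc ∑ p ∈ (univ : Finset α).offDiag, F (swap p.1 p.2)
      = ∑ q ∈ univ.sigma fun τ : Transposition α ↦ (τ : Perm α).support, F q.1 := by
        refine sum_bij' (fun p hp ↦ ⟨⟨swap p.1 p.2, p.1, p.2, (mem_offDiag.1 hp).2.2, rfl⟩, p.1⟩)
          (fun q _ ↦ (q.2, (q.1 : Perm α) q.2)) ?_ ?_ ?_ ?_ ?_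
        · simp +contextual
        · simp [eq_comm]
        · simp
        · rintro ⟨⟨τ, hτ⟩, i⟩ hi
          have hi' : τ i ≠ i := by simpa using hi
          simp [swap_apply_self_of_isSwap hτ hi']
        · simp
    _ = ∑ τ : Transposition α, 2 • F τ := by
        rw [sum_sigma]
        exact sum_congr rfl fun τ _ ↦ by simp [Perm.card_support_eq_two.2 τ.2]
    _ = 2 • ∑ τ : Transposition α, F τ := sum_nsmul ..

theorem sum_sum_swap {M : Type*} [AddCommMonoid M] (F : Perm α → M) :
    ∑ i, ∑ j, F (swap i j) = Fintype.card α • F 1 + 2 • ∑ τ : Transposition α, F τ := by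
  rw [← sum_offDiag_swap, ← sum_product', ← diag_union_offDiag, sum_union (disjoint_diag_offDiag _),
    sum_diag]
  simp [Perm.one_def]

theorem two_mul_card_transposition :
    2 * (Fintype.card (Transposition α) : ℝ) = Fintype.card α * (Fintype.card α - 1) := by
  have h : (Fintype.card α : ℝ) * Fintype.card α =
      Fintype.card α + 2 * Fintype.card (Transposition α) := by
    simpa using sum_sum_swap fun _ : Perm α ↦ (1 : ℝ)
  linarith

end Transposition

section InnerProduct

open scoped InnerProductSpace

theorem inner_apply_self_le_of_forall_eigenvalue_le {E : Type*} [NormedAddCommGroup E]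
    [InnerProductSpace ℝ E] [FiniteDimensional ℝ E] {S : E →ₗ[ℝ] E} (hS : S.IsSymmetric)
    {K : Submodule ℝ E} (hK : ∀ x ∈ K, S x ∈ K) {b : ℝ}
    (hb : ∀ f ∈ K, ∀ c, Module.End.HasEigenvector S c f → c ≤ b) {x : E} (hx : x ∈ K) :
    ⟪S x, x⟫_ℝ ≤ b * ‖x‖ ^ 2 := by
  have hSK : (S.restrict hK).IsSymmetric := hS.restrict_invariant hK
  set e := hSK.eigenvectorBasis rfl
  set v : K := ⟨x, hx⟩
  have hle : ∀ i, hSK.eigenvalues rfl i ≤ b := fun i ↦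
    hb (e i) (e i).2 _ ⟨Module.End.mem_eigenspace_iff.2 <| congrArg Subtype.val <|
      hSK.apply_eigenvectorBasis rfl i, fun h ↦ e.orthonormal.ne_zero i (Subtype.ext h)⟩
  calc ⟪S x, x⟫_ℝ = ⟪S.restrict hK v, v⟫_ℝ := rfl
    _ = ∑ i, hSK.eigenvalues rfl i * e.repr v i ^ 2 := by
        rw [← e.repr.inner_map_map, PiLp.inner_apply]
        refine sum_congr rfl fun i _ ↦ ?_
        rw [hSK.eigenvectorBasis_apply_self_apply rfl v i]
        simp [e]
        ring
    _ ≤ ∑ i, b * e.repr v i ^ 2 := by gcongr with i; exact hle i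
    _ = b * ‖x‖ ^ 2 := by
        rw [← mul_sum, show ‖x‖ = ‖v‖ from rfl, ← e.repr.norm_map, EuclideanSpace.real_norm_sq_eq]

section Projection

variable {E : Type*} [NormedAddCommGroup E] [InnerProductSpace ℝ E] {K L : Submodule ℝ E}
  [K.HasOrthogonalProjection] [L.HasOrthogonalProjection]

theorem starProjection_sub_starProjection_eq (hKL : K ≤ L) (x : E) :
    L.starProjection x - K.starProjection x = L.starProjection (Kᗮ.starProjection x) := by
  rw [Submodule.starProjection_orthogonal_val, map_sub,
    Submodule.starProjection_eq_self_iff.2 (hKL (K.starProjection_apply_mem x))]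

theorem starProjection_sub_starProjection_mem_orthogonal (hKL : K ≤ L) (x : E) :
    L.starProjection x - K.starProjection x ∈ Kᗮ := by
  rw [← sub_sub_sub_cancel_left _ _ x]
  exact sub_mem (K.sub_starProjection_mem_orthogonal x)
    (Submodule.orthogonal_le hKL (L.sub_starProjection_mem_orthogonal x))

end Projection

variable {G E : Type*} [Group G] [NormedAddCommGroup E] [InnerProductSpace ℝ E]
  {ρ : Representation ℝ G E}

theorem inner_map_left_eq_inner_map_inv_right (hρ : ∀ g v, ‖ρ g v‖ = ‖v‖) (g : G) (x y : E) :
    ⟪ρ g x, y⟫_ℝ = ⟪x, ρ g⁻¹ y⟫_ℝ := by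
  conv_lhs => rw [← ρ.self_inv_apply g y]
  exact (LinearIsometry.mk (ρ g) (hρ g)).inner_map_map _ _

theorem map_mem_orthogonal (hρ : ∀ g v, ‖ρ g v‖ = ‖v‖) {K : Submodule ℝ E}
    (hK : ∀ g, ∀ x ∈ K, ρ g x ∈ K) (g : G) {x : E} (hx : x ∈ Kᗮ) : ρ g x ∈ Kᗮ := by
  rw [Submodule.mem_orthogonal'] at *
  intro u hu
  rw [inner_map_left_eq_inner_map_inv_right hρ]
  exact hx _ (hK _ u hu)

theorem starProjection_map (hρ : ∀ g v, ‖ρ g v‖ = ‖v‖) {K : Submodule ℝ E}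
    [K.HasOrthogonalProjection] (hK : ∀ g, ∀ x ∈ K, ρ g x ∈ K) (g : G) (x : E) :
    K.starProjection (ρ g x) = ρ g (K.starProjection x) := by
  refine Submodule.eq_starProjection_of_mem_orthogonal (hK g _ (K.starProjection_apply_mem x)) ?_
  rw [← map_sub]
  exact map_mem_orthogonal hρ hK g (K.sub_starProjection_mem_orthogonal x)

variable {α : Type*} [DecidableEq α] {ρ : Representation ℝ (Perm α) E}

theorem isSymmetric_symmetrizer (hρ : ∀ g v, ‖ρ g v‖ = ‖v‖) (A : Finset α) :
    LinearMap.IsSymmetric (symmetrizer ρ A) := by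
  intro x y
  simp only [symmetrizer, LinearMap.sum_apply, sum_inner, inner_sum,
    inner_map_left_eq_inner_map_inv_right hρ]
  refine sum_equiv (Equiv.inv _) (fun s ↦ ?_) fun s _ ↦ rfl
  simp only [mem_permsOfFinset_iff_forall_notMem, inv_apply]
  exact forall₂_congr fun i _ ↦ by rw [Perm.inv_eq_iff_eq, eq_comm]

theorem isSymmetric_transpositionSum (hρ : ∀ g v, ‖ρ g v‖ = ‖v‖) (N : Finset α) :
    LinearMap.IsSymmetric (transpositionSum ρ N) := by
  intro x y
  simp only [transpositionSum, LinearMap.sum_apply, sum_inner, inner_sum,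
    inner_map_left_eq_inner_map_inv_right hρ, swap_inv]

theorem starProjection_symmetrizerKernel_card [Fintype α] [FiniteDimensional ℝ E]
    (hρ : ∀ g v, ‖ρ g v‖ = ‖v‖) (x : E) :
    (symmetrizerKernel ρ univ (Fintype.card α)).starProjection x =
      x - ((Fintype.card α).factorial : ℝ)⁻¹ • symmetrizer ρ univ x := by
  have hker : symmetrizerKernel ρ univ (Fintype.card α) = LinearMap.ker (symmetrizer ρ univ) := by
    simp [symmetrizerKernel, ← card_univ, powersetCard_self]
  have hsq := LinearMap.congr_fun (symmetrizer_mul_self ρ univ) x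
  rw [Module.End.mul_apply, LinearMap.smul_apply, card_univ] at hsq
  rw [hker]
  refine Submodule.eq_starProjection_of_mem_orthogonal ?_ ?_
  · rw [LinearMap.mem_ker, map_sub, map_smul, hsq, inv_smul_smul₀ (by positivity), sub_self]
  · rw [sub_sub_cancel, Submodule.mem_orthogonal']
    intro w hw
    rw [inner_smul_left, isSymmetric_symmetrizer hρ, LinearMap.mem_ker.1 hw, inner_zero_right,
      mul_zero]

end InnerProduct

section LazyWalk

open scoped InnerProductSpace

variable {E : Type*} [NormedAddCommGroup E] [InnerProductSpace ℝ E]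

/-- The operator by which a factor `τ ^ ξ` with `ξ` Bernoulli(1/2) acts on average. -/
def lazyStep {G V : Type*} [Group G] [AddCommGroup V] [Module ℝ V] (ρ : Representation ℝ G V)
    (τ : G) : Module.End ℝ V :=
  (1 / 2 : ℝ) • (1 + ρ τ)

theorem norm_sq_lazyStep {G : Type*} [Group G] {ρ : Representation ℝ G E}
    (hρ : ∀ g v, ‖ρ g v‖ = ‖v‖) (τ : G) (x : E) :
    ‖lazyStep ρ τ x‖ ^ 2 = 1 / 2 * (‖x‖ ^ 2 + ⟪ρ τ x, x⟫_ℝ) := by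
  have h : lazyStep ρ τ x = (1 / 2 : ℝ) • (x + ρ τ x) := rfl
  rw [h, norm_smul, mul_pow, norm_add_sq_real, hρ, real_inner_comm]
  norm_num
  ring

theorem inner_transpositionSum_univ_self {α : Type*} [DecidableEq α] [Fintype α]
    (ρ : Representation ℝ (Perm α) E) (x : E) :
    ⟪transpositionSum ρ univ x, x⟫_ℝ =
      Fintype.card α * ‖x‖ ^ 2 + 2 * ∑ τ : Transposition α, ⟪ρ τ x, x⟫_ℝ := by
  simp only [transpositionSum, LinearMap.sum_apply, sum_inner]
  rw [sum_sum_swap fun s ↦ ⟪ρ s x, x⟫_ℝ]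
  simp

variable [FiniteDimensional ℝ E]

theorem expect_norm_sq_lazyStep_le {α : Type*} [DecidableEq α] [Fintype α] [Nontrivial α]
    {ρ : Representation ℝ (Perm α) E} (hρ : ∀ g v, ‖ρ g v‖ = ‖v‖) {d m L : ℕ}
    (hd : Fintype.card α = d) (hmL : m + L = d) {x : E}
    (hx : x ∈ symmetrizerKernel ρ univ (L + 1)) :
    𝔼 τ : Transposition α, ‖lazyStep ρ τ x‖ ^ 2 ≤ Real.exp (-decayRate d m / d) * ‖x‖ ^ 2 := by
  have hinv : ∀ y ∈ symmetrizerKernel ρ univ (L + 1),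
      transpositionSum ρ univ y ∈ symmetrizerKernel ρ univ (L + 1) := fun y hy ↦ by
    simp only [transpositionSum, LinearMap.sum_apply]
    exact sum_mem fun i _ ↦ sum_mem fun j _ ↦ map_mem_symmetrizerKernel_univ ρ _ hy
  have hform : ⟪transpositionSum ρ univ x, x⟫_ℝ ≤ (d ^ 2 - 2 * decayRate d m * (d - 1)) * ‖x‖ ^ 2 :=
    inner_apply_self_le_of_forall_eigenvalue_le (isSymmetric_transpositionSum hρ _) hinv
      (fun f hf c hc ↦ eigenvalue_transpositionSum_univ_le hd hmL hf hc) hx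
  have hcard := two_mul_card_transposition (α := α)
  rw [inner_transpositionSum_univ_self] at hform
  rw [hd] at hform hcard
  have hd1 : (1 : ℝ) < d := by exact_mod_cast hd ▸ Fintype.one_lt_card (α := α)
  have hT : (0 : ℝ) < Fintype.card (Transposition α) := by exact_mod_cast Fintype.card_pos
  calc 𝔼 τ : Transposition α, ‖lazyStep ρ τ x‖ ^ 2
      = (Fintype.card (Transposition α) * ‖x‖ ^ 2 + ∑ τ : Transposition α, ⟪ρ τ x, x⟫_ℝ) / 2 /
          Fintype.card (Transposition α) := by
        simp only [norm_sq_lazyStep hρ, Fintype.expect_eq_sum_div_card, ← mul_sum,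
          sum_add_distrib, sum_const, card_univ, nsmul_eq_mul]
        ring
    _ ≤ (-decayRate d m / d + 1) * ‖x‖ ^ 2 := by
        rw [div_le_iff₀ hT]
        have hcancel : (-decayRate d m / d + 1) * ‖x‖ ^ 2 * Fintype.card (Transposition α) =
            (d - decayRate d m) * (d - 1) / 2 * ‖x‖ ^ 2 := by
          rw [eq_div_of_mul_eq two_ne_zero ((mul_comm ..).trans hcard)]
          field_simp
          ring
        rw [hcancel]
        linear_combination (1 / 4 : ℝ) * hform + ‖x‖ ^ 2 / 4 * hcard
    _ ≤ Real.exp (-decayRate d m / d) * ‖x‖ ^ 2 := by gcongr; exact Real.add_one_le_exp _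

end LazyWalk

section Walk

variable {d T : ℕ}

theorem permProd_cons (τ : Perm (Fin d)) (σ : Fin T → Perm (Fin d)) (b : Bool) (ξ : Fin T → Bool) :
    permProd (Fin.cons τ σ : Fin (T + 1) → Perm (Fin d)) (Fin.cons b ξ : Fin (T + 1) → Bool) =
      (if b then τ else 1) * permProd σ ξ := by
  simp [permProd, List.ofFn_succ]

variable {V : Type*} [AddCommGroup V] [Module ℝ V]

/-- The operator by which the law of `σ₁ ^ ξ₁ ⋯ σ_T ^ ξ_T` acts: the average of `ρ (permProd σ ξ)`
over `ξ`, or in other words the Fourier transform of that law at `ρ`. -/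
def walkOp (ρ : Representation ℝ (Perm (Fin d)) V) (σ : Fin T → Perm (Fin d)) : Module.End ℝ V :=
  ((2 : ℝ) ^ T)⁻¹ • ∑ ξ : Fin T → Bool, ρ (permProd σ ξ)

theorem walkOp_mem {ρ : Representation ℝ (Perm (Fin d)) V} {K : Submodule ℝ V}
    (hK : ∀ g, ∀ x ∈ K, ρ g x ∈ K) (σ : Fin T → Perm (Fin d)) {x : V} (hx : x ∈ K) :
    walkOp ρ σ x ∈ K := by
  simp only [walkOp, LinearMap.smul_apply, LinearMap.sum_apply]
  exact K.smul_mem _ (sum_mem fun ξ _ ↦ hK _ x hx)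

theorem walkOp_apply_of_forall_map_eq {ρ : Representation ℝ (Perm (Fin d)) V}
    (σ : Fin T → Perm (Fin d)) {x : V} (hx : ∀ g, ρ g x = x) : walkOp ρ σ x = x := by
  simp [walkOp, hx, ← Nat.cast_smul_eq_nsmul ℝ, smul_smul]

theorem walkOp_cons (ρ : Representation ℝ (Perm (Fin d)) V) (τ : Perm (Fin d))
    (σ : Fin T → Perm (Fin d)) :
    walkOp ρ (Fin.cons τ σ : Fin (T + 1) → Perm (Fin d)) = lazyStep ρ τ * walkOp ρ σ := by
  have hsum : ∑ ξ : Fin (T + 1) → Bool, ρ (permProd (Fin.cons τ σ : Fin (T + 1) → _) ξ) =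
      (1 + ρ τ) * ∑ ξ : Fin T → Bool, ρ (permProd σ ξ) := by
    rw [← (Fin.consEquiv fun _ ↦ Bool).sum_comp, Fintype.sum_prod_type, Fintype.sum_bool]
    simp [Fin.consEquiv, permProd_cons, add_mul, mul_sum, sum_add_distrib, add_comm]
  rw [walkOp, hsum, walkOp, lazyStep, smul_mul_smul_comm, pow_succ', mul_inv, one_div]

theorem expect_norm_sq_walkOp_le {E : Type*} [NormedAddCommGroup E] [InnerProductSpace ℝ E]
    [FiniteDimensional ℝ E] {ρ : Representation ℝ (Perm (Fin d)) E} (hρ : ∀ g v, ‖ρ g v‖ = ‖v‖)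
    (hd : 2 ≤ d) {m L : ℕ} (hmL : m + L = d) {x : E}
    (hx : x ∈ symmetrizerKernel ρ univ (L + 1)) :
    𝔼 σ : Fin T → Transposition (Fin d), ‖walkOp ρ (fun t ↦ (σ t : Perm (Fin d))) x‖ ^ 2 ≤
      Real.exp (-decayRate d m / d) ^ T * ‖x‖ ^ 2 := by
  have : Nontrivial (Fin d) := Fin.nontrivial_iff_two_le.2 hd
  induction T with
  | zero => simp [walkOp, permProd]
  | succ T ih =>
    have hcons (p : Transposition (Fin d) × (Fin T → Transposition (Fin d))) :
        walkOp ρ (fun t ↦ (Fin.consEquiv (fun _ ↦ Transposition (Fin d)) p t : Perm (Fin d))) x =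
          lazyStep ρ p.1 (walkOp ρ (fun t ↦ (p.2 t : Perm (Fin d))) x) := by
      rw [← Module.End.mul_apply, ← walkOp_cons]
      congr 2
      exact (Fin.comp_cons _ _ _)
    rw [← Fintype.expect_equiv (Fin.consEquiv fun _ ↦ Transposition (Fin d)) _ _ fun _ ↦ rfl]
    simp only [hcons]
    rw [← univ_product_univ, expect_product, expect_comm]
    calc _ ≤ 𝔼 σ : Fin T → Transposition (Fin d), Real.exp (-decayRate d m / d) *
          ‖walkOp ρ (fun t ↦ (σ t : Perm (Fin d))) x‖ ^ 2 :=
        expect_le_expect fun σ _ ↦ expect_norm_sq_lazyStep_le hρ (Fintype.card_fin d) hmL <|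
          walkOp_mem (fun g _ ↦ map_mem_symmetrizerKernel_univ ρ g) _ hx
      _ ≤ Real.exp (-decayRate d m / d) * (Real.exp (-decayRate d m / d) ^ T * ‖x‖ ^ 2) := by
        rw [← mul_expect]; gcongr
      _ = Real.exp (-decayRate d m / d) ^ (T + 1) * ‖x‖ ^ 2 := by ring

theorem norm_sq_walkOp_starProjection_of_le {E : Type*} [NormedAddCommGroup E]
    [InnerProductSpace ℝ E] {ρ : Representation ℝ (Perm (Fin d)) E} (hρ : ∀ g v, ‖ρ g v‖ = ‖v‖)
    {K L : Submodule ℝ E} [K.HasOrthogonalProjection] [L.HasOrthogonalProjection] (hKL : K ≤ L)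
    (hK : ∀ g, ∀ x ∈ K, ρ g x ∈ K) (σ : Fin T → Perm (Fin d)) (x : E) :
    ‖walkOp ρ σ (L.starProjection x)‖ ^ 2 =
      ‖walkOp ρ σ (K.starProjection x)‖ ^ 2 +
        ‖walkOp ρ σ (L.starProjection x - K.starProjection x)‖ ^ 2 := by
  have hmem := walkOp_mem hK σ (K.starProjection_apply_mem x)
  have horth := walkOp_mem (fun g _ ↦ map_mem_orthogonal hρ hK g) σ
    (starProjection_sub_starProjection_mem_orthogonal hKL x)
  rw [← add_sub_cancel (K.starProjection x) (L.starProjection x), map_add, add_sub_cancel,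
    norm_add_sq_real, Submodule.inner_right_of_mem_orthogonal hmem horth]
  ring

theorem expect_norm_sq_walkOp_starProjection_le {E : Type*} [NormedAddCommGroup E]
    [InnerProductSpace ℝ E] [FiniteDimensional ℝ E] {ρ : Representation ℝ (Perm (Fin d)) E}
    (hρ : ∀ g v, ‖ρ g v‖ = ‖v‖) (hd : 2 ≤ d) {n : ℕ} (hn : n ≤ d) (x : E) :
    𝔼 σ : Fin T → Transposition (Fin d), ‖walkOp ρ (fun t ↦ (σ t : Perm (Fin d)))
        ((symmetrizerKernel ρ univ n).starProjection x)‖ ^ 2 ≤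
      ∑ l ∈ range n, Real.exp (-decayRate d (d - l) / d) ^ T *
        ‖(symmetrizerKernel ρ univ l)ᗮ.starProjection x‖ ^ 2 := by
  induction n with
  | zero => simp [symmetrizerKernel_zero]
  | succ n ih =>
    have hle := monotone_symmetrizerKernel ρ univ n.le_succ
    rw [sum_range_succ]
    simp only [norm_sq_walkOp_starProjection_of_le hρ hle
      (fun g _ ↦ map_mem_symmetrizerKernel_univ ρ g), expect_add_distrib]
    gcongr
    · exact ih (by omega)
    have hmem : (symmetrizerKernel ρ univ (n + 1)).starProjection x -
        (symmetrizerKernel ρ univ n).starProjection x ∈ symmetrizerKernel ρ univ (n + 1) :=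
      Submodule.sub_mem _ (Submodule.starProjection_apply_mem _ _)
        (hle (Submodule.starProjection_apply_mem _ _))
    have hmn : d - n + n = d := by omega
    refine (expect_norm_sq_walkOp_le hρ hd hmn hmem).trans ?_
    gcongr
    rw [starProjection_sub_starProjection_eq hle]
    exact Submodule.norm_starProjection_apply_le _ _

end Walk

section PermRep

open scoped InnerProductSpace

theorem finrank_le_finrank_iInf_ker_add {K V W ι : Type*} [Field K] [AddCommGroup V] [Module K V]
    [FiniteDimensional K V] [AddCommGroup W] [Module K W] [Fintype ι] (f : ι → V →ₗ[K] W) :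
    Module.finrank K V ≤ Module.finrank K (⨅ i, LinearMap.ker (f i) : Submodule K V) +
      ∑ i, Module.finrank K (LinearMap.range (f i)) := by
  have hker : LinearMap.ker (LinearMap.pi fun i ↦ (f i).rangeRestrict) =
      ⨅ i, LinearMap.ker (f i) := by
    simp only [LinearMap.ker_pi, LinearMap.ker_rangeRestrict]
  rw [← (LinearMap.pi fun i ↦ (f i).rangeRestrict).finrank_range_add_finrank_ker, add_comm, hker,
    ← Module.finrank_pi_fintype]
  exact Nat.add_le_add_left (Submodule.finrank_le _) _

variable (G X : Type*) [Group G] [MulAction G X] [Fintype X]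

/-- The orthogonal representation of `G` on `ℝ^X` permuting the coordinates. For `X = G` it is the
left regular representation, and for `Gᵐᵒᵖ` acting on `G` the right regular one. -/
def permRep : Representation ℝ G (EuclideanSpace ℝ X) where
  toFun g :=
    (LinearIsometryEquiv.piLpCongrLeft 2 ℝ ℝ (MulAction.toPerm g)).toLinearEquiv.toLinearMap
  map_one' := by ext; simp
  map_mul' g h := by ext; simp [mul_smul]

variable {G X}

@[simp]
theorem permRep_apply (g : G) (f : EuclideanSpace ℝ X) (x : X) :
    permRep G X g f x = f (g⁻¹ • x) := rfl

theorem norm_permRep (g : G) (f : EuclideanSpace ℝ X) : ‖permRep G X g f‖ = ‖f‖ :=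
  LinearIsometryEquiv.norm_map _ f

variable [DecidableEq X]

theorem permRep_single (g : G) (x : X) (a : ℝ) :
    permRep G X g (EuclideanSpace.single x a) = EuclideanSpace.single (g • x) a :=
  LinearIsometryEquiv.piLpCongrLeft_single _ x a

theorem trace_eq_card_mul [MulAction.IsPretransitive G X] {S : Module.End ℝ (EuclideanSpace ℝ X)}
    (hS : ∀ g, Commute S (permRep G X g)) (x : X) :
    LinearMap.trace ℝ _ S = Fintype.card X * S (EuclideanSpace.single x 1) x := by
  have hconst (y : X) : S (EuclideanSpace.single y 1) y = S (EuclideanSpace.single x 1) x := by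
    obtain ⟨g, rfl⟩ := MulAction.exists_smul_eq G x y
    rw [← permRep_single, ← Module.End.mul_apply, (hS g).eq, Module.End.mul_apply, permRep_apply,
      inv_smul_smul]
  rw [LinearMap.trace_eq_sum_inner S (EuclideanSpace.basisFun X ℝ)]
  simp [hconst, EuclideanSpace.inner_single_left]

theorem finrank_eq_card_mul_norm_sq_starProjection [MulAction.IsPretransitive G X]
    {K : Submodule ℝ (EuclideanSpace ℝ X)} (hK : ∀ g, ∀ f ∈ K, permRep G X g f ∈ K) (x : X) :
    (Module.finrank ℝ K : ℝ) =
      Fintype.card X * ‖K.starProjection (EuclideanSpace.single x 1)‖ ^ 2 := by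
  have hproj : LinearMap.IsProj K (K.starProjection : Module.End ℝ (EuclideanSpace ℝ X)) :=
    ⟨K.starProjection_apply_mem, fun _ ↦ Submodule.starProjection_eq_self_iff.2⟩
  have hcomm (g : G) : Commute (K.starProjection : Module.End ℝ (EuclideanSpace ℝ X))
      (permRep G X g) :=
    LinearMap.ext (starProjection_map norm_permRep hK g)
  have hnorm := K.re_inner_starProjection_eq_normSq (EuclideanSpace.single x (1 : ℝ))
  rw [EuclideanSpace.inner_single_right] at hnorm
  rw [← hproj.trace, trace_eq_card_mul hcomm x]
  congr 1
  simpa using hnorm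

variable {α : Type*} [DecidableEq α] [Fintype α]

theorem commute_symmetrizer_permRep (A : Finset α) (g : (Perm α)ᵐᵒᵖ) :
    Commute (symmetrizer (permRep (Perm α) (Perm α)) A) (permRep (Perm α)ᵐᵒᵖ (Perm α) g) :=
  Commute.sum_left _ _ _ fun s _ ↦ by
    ext f x
    simp [mul_assoc]

theorem factorial_mul_finrank_range_symmetrizer (A : Finset α) :
    (#A).factorial *
      Module.finrank ℝ (LinearMap.range (symmetrizer (permRep (Perm α) (Perm α)) A)) =
        (Fintype.card α).factorial := by
  set S := symmetrizer (permRep (Perm α) (Perm α)) A with hS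
  have hA : ((#A).factorial : ℝ) ≠ 0 := by positivity
  have hproj : LinearMap.IsProj (LinearMap.range S) (((#A).factorial : ℝ)⁻¹ • S) := by
    rw [← LinearMap.range_smul _ _ (inv_ne_zero hA)]
    refine LinearMap.IsIdempotentElem.isProj_range _ ?_
    rw [IsIdempotentElem, smul_mul_smul_comm, symmetrizer_mul_self, smul_smul,
      inv_mul_cancel_right₀ hA]
  have hone : S (EuclideanSpace.single 1 1) 1 = 1 := by
    simp [hS, symmetrizer, permRep_single, Pi.single_apply, mem_permsOfFinset_iff_forall_notMem]
  have htrace := hproj.trace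
  rw [map_smul, trace_eq_card_mul (commute_symmetrizer_permRep A) 1, hone, mul_one,
    Fintype.card_perm, smul_eq_mul, inv_mul_eq_iff_eq_mul₀ hA] at htrace
  exact_mod_cast htrace.symm

theorem finrank_symmetrizerKernel_orthogonal_mul_factorial_le (n : ℕ) :
    Module.finrank ℝ (symmetrizerKernel (permRep (Perm α) (Perm α)) univ n)ᗮ * n.factorial ≤
      (Fintype.card α).choose n * (Fintype.card α).factorial := by
  set K := symmetrizerKernel (permRep (Perm α) (Perm α)) univ n with hK
  set S := fun A : (univ : Finset α).powersetCard n ↦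
    symmetrizer (permRep (Perm α) (Perm α)) A.1
  have hle := finrank_le_finrank_iInf_ker_add S
  have hK' : ⨅ A, LinearMap.ker (S A) = K := by rw [hK, symmetrizerKernel, iInf_subtype']
  rw [hK', ← K.finrank_add_finrank_orthogonal] at hle
  have hrange (A : (univ : Finset α).powersetCard n) :
      Module.finrank ℝ (LinearMap.range (S A)) * n.factorial = (Fintype.card α).factorial := by
    rw [mul_comm, ← (mem_powersetCard.1 A.2).2, factorial_mul_finrank_range_symmetrizer]
  calc Module.finrank ℝ Kᗮ * n.factorial
      ≤ (∑ A, Module.finrank ℝ (LinearMap.range (S A))) * n.factorial :=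
        Nat.mul_le_mul_right _ (Nat.le_of_add_le_add_left hle)
    _ = (Fintype.card α).choose n * (Fintype.card α).factorial := by
        simp [sum_mul, hrange]

theorem norm_sq_starProjection_symmetrizerKernel_orthogonal_le (n : ℕ) (x : Perm α) :
    ‖(symmetrizerKernel (permRep (Perm α) (Perm α)) univ n)ᗮ.starProjection
        (EuclideanSpace.single x 1)‖ ^ 2 ≤ ((Fintype.card α).choose n : ℝ) / n.factorial := by
  set K := symmetrizerKernel (permRep (Perm α) (Perm α)) univ n with hK
  have hright (g : (Perm α)ᵐᵒᵖ) (f : EuclideanSpace ℝ (Perm α)) (hf : f ∈ K) :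
      permRep (Perm α)ᵐᵒᵖ (Perm α) g f ∈ K := by
    rw [hK, mem_symmetrizerKernel] at *
    intro A hA hcard
    rw [← Module.End.mul_apply, (commute_symmetrizer_permRep A g).eq, Module.End.mul_apply,
      hf A hA hcard, map_zero]
  have hdim := finrank_eq_card_mul_norm_sq_starProjection
    (fun g _ ↦ map_mem_orthogonal norm_permRep hright g) x
  have hcodim : (Module.finrank ℝ Kᗮ * n.factorial : ℝ) ≤
      (Fintype.card α).choose n * (Fintype.card α).factorial := by
    exact_mod_cast finrank_symmetrizerKernel_orthogonal_mul_factorial_le n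
  rw [hdim, Fintype.card_perm, mul_comm ((Fintype.card α).choose n : ℝ), mul_assoc] at hcodim
  rw [le_div_iff₀ (by positivity)]
  exact le_of_mul_le_mul_left hcodim (by positivity)

end PermRep

section TotalVariation

variable {d T : ℕ}

theorem sum_permProdPMF (σ : Fin T → Perm (Fin d)) : ∑ τ, permProdPMF σ τ = 1 := by
  have h := card_eq_sum_card_fiberwise (f := permProd σ) (s := univ) (t := univ) fun _ _ ↦ by simp
  simp only [permProdPMF]
  rw [← sum_div, ← Nat.cast_sum, ← h]
  simp

theorem permProdPMF_nonneg (σ : Fin T → Perm (Fin d)) (τ : Perm (Fin d)) :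
    0 ≤ permProdPMF σ τ := by
  unfold permProdPMF
  positivity

theorem tvToUniform_le_two (σ : Fin T → Perm (Fin d)) : tvToUniform σ ≤ 2 := by
  calc tvToUniform σ ≤ ∑ τ, (permProdPMF σ τ + (d.factorial : ℝ)⁻¹) := by
        refine sum_le_sum fun τ _ ↦ (abs_sub _ _).trans_eq ?_
        rw [abs_of_nonneg (permProdPMF_nonneg σ τ), abs_of_nonneg (by positivity)]
    _ = 2 := by
        rw [sum_add_distrib, sum_permProdPMF]
        simp [Fintype.card_perm, Nat.factorial_ne_zero]
        norm_num

theorem walkOp_permRep_single_one (σ : Fin T → Perm (Fin d)) (τ : Perm (Fin d)) :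
    walkOp (permRep (Perm (Fin d)) (Perm (Fin d))) σ (EuclideanSpace.single 1 1) τ =
      permProdPMF σ τ := by
  simp [walkOp, permProdPMF, permRep_single, Pi.single_apply, eq_comm, div_eq_inv_mul]

theorem sq_tvToUniform_le (σ : Fin T → Perm (Fin d)) :
    tvToUniform σ ^ 2 ≤ d.factorial * ‖walkOp (permRep (Perm (Fin d)) (Perm (Fin d))) σ
      ((symmetrizerKernel (permRep (Perm (Fin d)) (Perm (Fin d))) univ d).starProjection
        (EuclideanSpace.single 1 1))‖ ^ 2 := by
  set ρ := permRep (Perm (Fin d)) (Perm (Fin d)) with hρ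
  set δ : EuclideanSpace ℝ (Perm (Fin d)) := EuclideanSpace.single 1 1 with hδ
  have hmem (g : Perm (Fin d)) : g ∈ permsOfFinset univ := by
    simp [mem_permsOfFinset_iff_forall_notMem]
  have hone (τ : Perm (Fin d)) : symmetrizer ρ univ δ τ = 1 := by
    simp [hρ, hδ, symmetrizer, permRep_single, Pi.single_apply, hmem]
  have hfix (g : Perm (Fin d)) : ρ g (symmetrizer ρ univ δ) = symmetrizer ρ univ δ :=
    LinearMap.congr_fun (map_mul_symmetrizer ρ (hmem g)) δ
  have hproj := starProjection_symmetrizerKernel_card (ρ := ρ) norm_permRep δ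
  rw [Fintype.card_fin] at hproj
  rw [hproj, map_sub, map_smul, walkOp_apply_of_forall_map_eq σ hfix,
    EuclideanSpace.real_norm_sq_eq, tvToUniform]
  refine sq_sum_le_card_mul_sum_sq.trans_eq ?_
  simp [Fintype.card_perm, hone, hρ ▸ hδ ▸ walkOp_permRep_single_one σ]

theorem avgTV_eq_expect (d T : ℕ) :
    avgTV d T = 𝔼 σ : Fin T → Transposition (Fin d), tvToUniform fun t ↦ (σ t : Perm (Fin d)) := by
  simp [avgTV, Fintype.expect_eq_sum_div_card]

theorem avgTV_le_two (d T : ℕ) : avgTV d T ≤ 2 := by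
  rw [avgTV_eq_expect, Fintype.expect_eq_sum_div_card]
  refine div_le_of_le_mul₀ (by positivity) zero_le_two ?_
  rw [mul_comm, ← nsmul_eq_mul]
  exact sum_le_card_nsmul _ _ _ fun σ _ ↦ tvToUniform_le_two _

theorem sq_avgTV_le (T : ℕ) (hd : 2 ≤ d) :
    avgTV d T ^ 2 ≤ d.factorial * ∑ l ∈ range d,
      Real.exp (-decayRate d (d - l) / d) ^ T * (d.choose l / l.factorial) := by
  have : Nontrivial (Fin d) := Fin.nontrivial_iff_two_le.2 hd
  rw [avgTV_eq_expect]
  set ρ := permRep (Perm (Fin d)) (Perm (Fin d)) 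
  set δ : EuclideanSpace ℝ (Perm (Fin d)) := EuclideanSpace.single 1 1
  calc (𝔼 σ : Fin T → Transposition (Fin d), tvToUniform fun t ↦ (σ t : Perm (Fin d))) ^ 2
      ≤ 𝔼 σ : Fin T → Transposition (Fin d), tvToUniform (fun t ↦ (σ t : Perm (Fin d))) ^ 2 := by
        simpa using expect_mul_sq_le_sq_mul_sq univ
          (fun σ : Fin T → Transposition (Fin d) ↦ tvToUniform fun t ↦ (σ t : Perm (Fin d))) 1
    _ ≤ 𝔼 σ : Fin T → Transposition (Fin d), d.factorial *
          ‖walkOp ρ (fun t ↦ (σ t : Perm (Fin d)))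
            ((symmetrizerKernel ρ univ d).starProjection δ)‖ ^ 2 :=
        expect_le_expect fun σ _ ↦ sq_tvToUniform_le _
    _ ≤ d.factorial * ∑ l ∈ range d, Real.exp (-decayRate d (d - l) / d) ^ T *
          ‖(symmetrizerKernel ρ univ l)ᗮ.starProjection δ‖ ^ 2 := by
        rw [← mul_expect]
        gcongr
        exact expect_norm_sq_walkOp_starProjection_le norm_permRep hd le_rfl δ
    _ ≤ _ := by
        gcongr with l
        simpa using norm_sq_starProjection_symmetrizerKernel_orthogonal_le (α := Fin d) l 1

end TotalVariation

section Estimates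

variable {d k : ℕ}

theorem pow_div_factorial_le_exp_mul_pow (a : ℝ) {c : ℝ} (ha : 0 ≤ a) (hc : 0 < c) (k : ℕ) :
    a ^ k / k.factorial ≤ Real.exp (a * c) * (1 / c) ^ k := by
  have h := Real.pow_div_factorial_le_exp (a * c) (by positivity) k
  calc a ^ k / k.factorial = (a * c) ^ k / k.factorial * (1 / c) ^ k := by
        rw [mul_pow, one_div, inv_pow]
        field_simp
    _ ≤ Real.exp (a * c) * (1 / c) ^ k := by gcongr

theorem pow_div_factorial_sq_le (h : d ≤ 4 * k) :
    (d : ℝ) ^ k / k.factorial ^ 2 ≤ Real.exp (16 * Real.exp 1) * (1 / 4) ^ k := by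
  have hkk := Real.pow_div_factorial_le_exp (k : ℝ) (by positivity) k
  have hd : (d : ℝ) ≤ 4 * k := by exact_mod_cast h
  calc (d : ℝ) ^ k / k.factorial ^ 2 ≤ (4 * k) ^ k / k.factorial ^ 2 := by gcongr
    _ = 4 ^ k * ((k : ℝ) ^ k / k.factorial) / k.factorial := by rw [mul_pow]; field_simp
    _ ≤ 4 ^ k * Real.exp k / k.factorial := by gcongr
    _ = (4 * Real.exp 1) ^ k / k.factorial := by rw [mul_pow, ← Real.exp_one_pow]
    _ ≤ Real.exp (4 * Real.exp 1 * 4) * (1 / 4) ^ k :=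
        pow_div_factorial_le_exp_mul_pow _ (by positivity) (by norm_num) k
    _ = Real.exp (16 * Real.exp 1) * (1 / 4) ^ k := by ring_nf

theorem rpow_sub_decayRate_div_factorial_le (hd : 1 ≤ d) (k : ℕ) :
    (d : ℝ) ^ (2 * k - 3 * decayRate d k) / k.factorial ≤
      Real.exp (8 * Real.exp 1) * (1 / 2) ^ k := by
  have hd1 : (1 : ℝ) ≤ d := by exact_mod_cast hd
  unfold decayRate
  split_ifs with h
  · calc (d : ℝ) ^ (2 * k - 3 * (3 / 4 * k) : ℝ) / k.factorial ≤ 1 ^ k / k.factorial := by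
          gcongr
          rw [one_pow]
          refine Real.rpow_le_one_of_one_le_of_nonpos hd1 ?_
          have : (0 : ℝ) ≤ k := by positivity
          linarith
      _ ≤ Real.exp (1 * 2) * (1 / 2) ^ k :=
          pow_div_factorial_le_exp_mul_pow 1 zero_le_one two_pos k
      _ ≤ Real.exp (8 * Real.exp 1) * (1 / 2) ^ k := by
          refine mul_le_mul_of_nonneg_right (Real.exp_le_exp.2 ?_) (by positivity)
          linarith [Real.one_le_exp (zero_le_one' ℝ)]
  · refine le_of_sq_le_sq ?_ (by positivity)
    calc ((d : ℝ) ^ (2 * k - 3 * (k / 2) : ℝ) / k.factorial) ^ 2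
        = (d : ℝ) ^ k / k.factorial ^ 2 := by
          rw [div_pow, ← Real.rpow_mul_natCast (by positivity), ← Real.rpow_natCast (d : ℝ) k]
          congr 2
          push_cast
          ring
      _ ≤ Real.exp (16 * Real.exp 1) * (1 / 4) ^ k := pow_div_factorial_sq_le (by omega)
      _ = (Real.exp (8 * Real.exp 1) * (1 / 2) ^ k) ^ 2 := by
          rw [mul_pow, ← Real.exp_nat_mul, ← pow_mul, mul_comm k 2, pow_mul]
          norm_num [← mul_assoc]

theorem factorial_div_factorial_mul_choose_le {l : ℕ} (hl : l ≤ d) :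
    (d.factorial : ℝ) * (d.choose l / l.factorial) ≤
      (d : ℝ) ^ (2 * (d - l)) / (d - l).factorial := by
  have hfact : (d.factorial : ℝ) = l.factorial * d.descFactorial (d - l) := by
    have h := Nat.factorial_mul_descFactorial (Nat.sub_le d l)
    rw [Nat.sub_sub_self hl] at h
    exact_mod_cast h.symm
  have hdesc : (d.descFactorial (d - l) : ℝ) ≤ d ^ (d - l) := by
    exact_mod_cast d.descFactorial_le_pow (d - l)
  have hchoose := Nat.choose_le_pow_div (α := ℝ) (d - l) d
  rw [Nat.choose_symm hl] at hchoose
  calc (d.factorial : ℝ) * (d.choose l / l.factorial)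
      = d.descFactorial (d - l) * d.choose l := by rw [hfact]; field_simp
    _ ≤ d ^ (d - l) * (d ^ (d - l) / (d - l).factorial) := by gcongr
    _ = (d : ℝ) ^ (2 * (d - l)) / (d - l).factorial := by rw [two_mul, pow_add, mul_div_assoc]

theorem one_third_le_decayRate (hk : 1 ≤ k) : 1 / 3 ≤ decayRate d k := by
  have : (1 : ℝ) ≤ k := by exact_mod_cast hk
  unfold decayRate
  split_ifs <;> linarith

theorem exp_neg_decayRate_pow_le {T : ℕ} (hd : 1 ≤ d) (hT : 3 * d * Real.log d ≤ T) (hk : 1 ≤ k) :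
    Real.exp (-decayRate d k / d) ^ T ≤
      (d : ℝ) ^ (-(3 * decayRate d k)) * (d * Real.exp (-T / (3 * d))) := by
  have hd0 : (0 : ℝ) < d := by exact_mod_cast hd
  have hrate := one_third_le_decayRate (d := d) hk
  have hT' : 3 * Real.log d ≤ T / d := by rw [le_div_iff₀ hd0]; linarith
  calc Real.exp (-decayRate d k / d) ^ T = Real.exp (-(decayRate d k * (T / d))) := by
        rw [← Real.exp_nat_mul]; ring_nf
    _ ≤ Real.exp (Real.log d * -(3 * decayRate d k) + (Real.log d + -T / (3 * d))) := by
        gcongr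
        have : (-T : ℝ) / (3 * d) = -(T / d) / 3 := by field_simp
        rw [this]
        nlinarith
    _ = _ := by rw [Real.exp_add, Real.exp_add, Real.exp_log hd0, Real.rpow_def_of_pos hd0]

theorem factorial_mul_exp_neg_decayRate_mul_choose_le {l T : ℕ} (hl : l < d)
    (hT : 3 * d * Real.log d ≤ T) :
    d.factorial * (Real.exp (-decayRate d (d - l) / d) ^ T * (d.choose l / l.factorial)) ≤
      Real.exp (8 * Real.exp 1) * (d * Real.exp (-T / (3 * d))) * (1 / 2) ^ (d - l) := by
  have hd : 1 ≤ d := by omega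
  have hdim := factorial_div_factorial_mul_choose_le hl.le
  have hk : 1 ≤ d - l := by omega
  generalize d - l = k at *
  calc d.factorial * (Real.exp (-decayRate d k / d) ^ T * (d.choose l / l.factorial))
      = d.factorial * (d.choose l / l.factorial) * Real.exp (-decayRate d k / d) ^ T := by ring
    _ ≤ d ^ (2 * k) / k.factorial *
          ((d : ℝ) ^ (-(3 * decayRate d k)) * (d * Real.exp (-T / (3 * d)))) := by
        gcongr
        exact exp_neg_decayRate_pow_le hd hT hk
    _ = (d : ℝ) ^ (2 * k - 3 * decayRate d k) / k.factorial *
          (d * Real.exp (-T / (3 * d))) := by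
        have hpow : (d : ℝ) ^ (2 * k : ℝ) = d ^ (2 * k) := by
          exact_mod_cast Real.rpow_natCast (d : ℝ) (2 * k)
        rw [sub_eq_add_neg, Real.rpow_add (by positivity), hpow]
        ring
    _ ≤ Real.exp (8 * Real.exp 1) * (1 / 2) ^ k * (d * Real.exp (-T / (3 * d))) := by
        gcongr
        exact rpow_sub_decayRate_div_factorial_le hd k
    _ = _ := by ring

theorem sum_range_one_half_pow_sub_le (d : ℕ) : ∑ l ∈ range d, (1 / 2 : ℝ) ^ (d - l) ≤ 1 := by
  calc ∑ l ∈ range d, (1 / 2 : ℝ) ^ (d - l) = ∑ j ∈ range d, (1 / 2 : ℝ) ^ (j + 1) := by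
        rw [← sum_range_reflect]
        refine sum_congr rfl fun l hl ↦ ?_
        rw [mem_range] at hl
        congr 1
        omega
    _ = (∑ j ∈ range d, (1 / 2 : ℝ) ^ j) * (1 / 2) := by simp only [pow_succ, sum_mul]
    _ ≤ 1 := by linarith [sum_geometric_two_le d]

theorem sq_avgTV_le_of_three_mul_log_le {T : ℕ} (hd : 2 ≤ d) (hT : 3 * d * Real.log d ≤ T) :
    avgTV d T ^ 2 ≤ Real.exp (8 * Real.exp 1) * (d * Real.exp (-T / (3 * d))) := by
  calc avgTV d T ^ 2
      ≤ ∑ l ∈ range d, d.factorial *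
          (Real.exp (-decayRate d (d - l) / d) ^ T * (d.choose l / l.factorial)) :=
        (sq_avgTV_le T hd).trans_eq (mul_sum ..)
    _ ≤ ∑ l ∈ range d,
          Real.exp (8 * Real.exp 1) * (d * Real.exp (-T / (3 * d))) * (1 / 2) ^ (d - l) :=
        sum_le_sum fun _ hl ↦
          factorial_mul_exp_neg_decayRate_mul_choose_le (mem_range.1 hl) hT
    _ ≤ Real.exp (8 * Real.exp 1) * (d * Real.exp (-T / (3 * d))) := by
        rw [← mul_sum]
        exact mul_le_of_le_one_right (by positivity) (sum_range_one_half_pow_sub_le d)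

end Estimates

theorem random_signed_transposition_mixing_general :
    ∃ C : ℝ, 0 < C ∧ ∀ d T : ℕ, 2 ≤ d →
      avgTV d T ≤ C * ((d : ℝ) ^ ((1 : ℝ) / 2) * Real.exp (-(T : ℝ) / (6 * d))) := by
  refine ⟨Real.exp (4 * Real.exp 1), Real.exp_pos _, fun d T hd ↦ ?_⟩
  have hd0 : (0 : ℝ) < d := by positivity
  set X := (d : ℝ) ^ ((1 : ℝ) / 2) * Real.exp (-(T : ℝ) / (6 * d)) with hX
  obtain hT | hT := le_total (3 * (d : ℝ) * Real.log d) T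
  · have hX2 : X ^ 2 = d * Real.exp (-T / (3 * d)) := by
      rw [hX, mul_pow, ← Real.rpow_mul_natCast hd0.le, ← Real.exp_nat_mul]
      congr 1
      · norm_num
      · push_cast
        ring_nf
    refine le_of_sq_le_sq ((sq_avgTV_le_of_three_mul_log_le hd hT).trans_eq ?_) (by positivity)
    rw [mul_pow, hX2, ← Real.exp_nat_mul]
    ring_nf
  · have hX1 : 1 ≤ X := by
      rw [hX, Real.rpow_def_of_pos hd0, ← Real.exp_add, Real.one_le_exp_iff, neg_div,
        ← sub_eq_add_neg, sub_nonneg, div_le_iff₀ (by positivity)]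
      linarith
    have h2 : 2 ≤ Real.exp (4 * Real.exp 1) := by
      linarith [Real.add_one_le_exp (4 * Real.exp 1), Real.one_le_exp (zero_le_one' ℝ)]
    nlinarith [avgTV_le_two d T]

/-- **Lemma B.1**: products of random transpositions with Bernoulli exponents mix to the
uniform distribution on the symmetric group. -/
theorem random_signed_transposition_mixing :
    ∃ C : ℝ, 0 < C ∧
      ∀ d T : ℕ, 10 ≤ d → 1 ≤ T →
      avgTV d T ≤
        C * ((d : ℝ) ^ ((1 : ℝ) / 2) * Real.exp (-(T : ℝ) / (6 * d)) +
          ((d.factorial : ℝ)) ^ ((1 : ℝ) / 2) *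
            ((Real.sqrt 5 - 1) / 2) ^ ((T : ℝ) / 2)) := by
  obtain ⟨C, hC, h⟩ := random_signed_transposition_mixing_general
  have hsqrt : (0 : ℝ) ≤ Real.sqrt 5 - 1 := sub_nonneg.2 (Real.one_le_sqrt.2 (by norm_num))
  refine ⟨C, hC, fun d T hd _ ↦ (h d T (by omega)).trans ?_⟩
  gcongr
  exact le_add_of_nonneg_right (by positivity)

end KacJL
end
end

section
/- Let d ≥ 1, let Z be a uniformly random point on the sphere S^{d−1}, let k ∈ {1,…,d}, and let ε ∈ (0,1). Then P[ | Σ_{i=1}^k Z[i]² − k/d | ≥ ε k / (2d) ] ≤ 2 exp(−ε² k / 64). -/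
noncomputable section

open MeasureTheory Real ProbabilityTheory
open scoped ENNReal

namespace KacJL

/-- The Euclidean norm on `ℝ^d`. -/
def l2norm {d : ℕ} (x : Fin d → ℝ) : ℝ := Real.sqrt (∑ i, x i ^ 2)

/-- The uniform (rotation-invariant) probability measure on the unit sphere `S^{d-1}`,
realized as the pushforward of the standard Gaussian measure on `ℝ^d` under radial
normalization. -/
def sphereUniform (d : ℕ) : Measure (Fin d → ℝ) :=
  Measure.map (fun x : Fin d → ℝ => (l2norm x)⁻¹ • x)
    (Measure.pi fun _ : Fin d => gaussianReal 0 1)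

/-!
The uniform point on the sphere is `x / ‖x‖` with `x` a standard Gaussian vector, so the
inequality `t ≤ ∑ cᵢ zᵢ²` for `z = x / ‖x‖` becomes the sign condition `0 ≤ ∑ (cᵢ - t) xᵢ²` on
independent Gaussians. Markov's inequality for `exp (½ ∑ (cᵢ - t) xᵢ²)`, whose expectation factors
over the coordinates, then bounds its probability. Both tails arise from `c = (δ / 2) 1ₛ` and
`t = (δ / 2) (1 + δ) |s| / d`, the sign of `δ` selecting the side.
-/

lemma inv_one_sub_le_exp_add_sq {x : ℝ} (hx : x ≤ 1 / 2) : (1 - x)⁻¹ ≤ exp (x + x ^ 2) := by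
  have h_pos : 0 < 1 - x := by linarith
  rw [inv_le_iff_one_le_mul₀ h_pos]
  rcases le_total x 0 with h_neg | h_nonneg
  · calc
      1 ≤ (x + x ^ 2 + 1) * (1 - x) := by
        linarith [mul_nonneg (neg_nonneg.2 h_neg) (sq_nonneg x)]
      _ ≤ exp (x + x ^ 2) * (1 - x) := by gcongr; exact add_one_le_exp _
  · have h_cubic : 0 ≤ 1 - x - x ^ 2 - x ^ 3 := by
      have : x ^ 2 ≤ (1 / 2) ^ 2 := by gcongr
      have : x ^ 3 ≤ (1 / 2) ^ 3 := by gcongr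
      linarith
    calc
      1 ≤ (1 + (x + x ^ 2) + (x + x ^ 2) ^ 2 / 2) * (1 - x) := by
        linarith [mul_nonneg (sq_nonneg x) h_cubic]
      _ ≤ exp (x + x ^ 2) * (1 - x) := by
        gcongr; exact quadratic_le_exp_of_nonneg (by positivity)

lemma lintegral_pi_prod_eq_prod_lintegral {ι : Type*} [Fintype ι] {X : ι → Type*}
    [∀ i, MeasurableSpace (X i)] (μ : ∀ i, Measure (X i)) [∀ i, IsProbabilityMeasure (μ i)]
    {f : ∀ i, X i → ℝ≥0∞} (hf : ∀ i, Measurable (f i)) :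
    ∫⁻ x, ∏ i, f i (x i) ∂Measure.pi μ = ∏ i, ∫⁻ y, f i y ∂μ i := by
  have h_indep : iIndepFun (fun i (x : ∀ i, X i) ↦ f i (x i)) (Measure.pi μ) :=
    iIndepFun_pi fun i ↦ (hf i).aemeasurable
  rw [lintegral_prod_eq_prod_lintegral_of_indepFun _ _ h_indep fun i ↦
    (hf i).comp (measurable_pi_apply i)]
  exact Finset.prod_congr rfl fun i _ ↦ (measurePreserving_eval μ i).lintegral_comp (hf i)

section Gaussian

lemma gaussianPDFReal_mul_exp_half_mul_sq {c : ℝ} (hc : c < 1) (y : ℝ) :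
    gaussianPDFReal 0 1 y * exp (c * y ^ 2 / 2) =
      (√(1 - c))⁻¹ * gaussianPDFReal 0 (1 - c)⁻¹.toNNReal y := by
  have h_pos : 0 < 1 - c := sub_pos.2 hc
  simp only [gaussianPDFReal, NNReal.coe_one, coe_toNNReal _ (inv_pos.2 h_pos).le, mul_one,
    sub_zero]
  rw [mul_assoc, ← exp_add, ← mul_assoc, ← mul_inv, ← sqrt_mul h_pos.le]
  congr 1
  · field_simp
  · field_simp
    ring_nf

lemma lintegral_exp_half_mul_sq_gaussianReal {c : ℝ} (hc : c < 1) :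
    ∫⁻ y, ENNReal.ofReal (exp (c * y ^ 2 / 2)) ∂gaussianReal 0 1 =
      ENNReal.ofReal (√(1 - c))⁻¹ := by
  have h_var : (1 - c)⁻¹.toNNReal ≠ 0 := (toNNReal_pos.2 (inv_pos.2 (sub_pos.2 hc))).ne'
  have h_density (y : ℝ) :
      (gaussianPDF 0 1 * fun y ↦ ENNReal.ofReal (exp (c * y ^ 2 / 2))) y =
        ENNReal.ofReal (√(1 - c))⁻¹ * gaussianPDF 0 (1 - c)⁻¹.toNNReal y := by
    rw [Pi.mul_apply, gaussianPDF, gaussianPDF, ← ENNReal.ofReal_mul (gaussianPDFReal_nonneg _ _ _),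
      ← ENNReal.ofReal_mul (by positivity), gaussianPDFReal_mul_exp_half_mul_sq hc]
  rw [gaussianReal_of_var_ne_zero 0 one_ne_zero,
    lintegral_withDensity_eq_lintegral_mul _ (measurable_gaussianPDF _ _) (by fun_prop),
    lintegral_congr h_density, lintegral_const_mul _ (measurable_gaussianPDF _ _),
    lintegral_gaussianPDF_eq_one _ h_var, mul_one]

lemma lintegral_exp_half_mul_sq_gaussianReal_le {c : ℝ} (hc : c ≤ 1 / 2) :
    ∫⁻ y, ENNReal.ofReal (exp (c * y ^ 2 / 2)) ∂gaussianReal 0 1 ≤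
      ENNReal.ofReal (exp ((c + c ^ 2) / 2)) := by
  rw [lintegral_exp_half_mul_sq_gaussianReal (by linarith), ← sqrt_inv, exp_half]
  gcongr
  exact inv_one_sub_le_exp_add_sq hc

variable {ι : Type*} [Fintype ι]

lemma lintegral_exp_half_sum_mul_sq_gaussian_le {c : ι → ℝ} (hc : ∀ i, c i ≤ 1 / 2) :
    ∫⁻ x, ENNReal.ofReal (exp ((∑ i, c i * x i ^ 2) / 2))
        ∂Measure.pi (fun _ : ι ↦ gaussianReal 0 1) ≤
      ENNReal.ofReal (exp ((∑ i, (c i + c i ^ 2)) / 2)) := by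
  simp only [Finset.sum_div, exp_sum, ENNReal.ofReal_prod_of_nonneg fun _ _ ↦ (exp_pos _).le]
  rw [lintegral_pi_prod_eq_prod_lintegral (f := fun i y ↦ ENNReal.ofReal (exp (c i * y ^ 2 / 2))) _
    fun i ↦ by fun_prop]
  exact Finset.prod_le_prod' fun i _ ↦ lintegral_exp_half_mul_sq_gaussianReal_le (hc i)

lemma gaussian_sum_mul_sq_nonneg_le {c : ι → ℝ} (hc : ∀ i, c i ≤ 1 / 2) :
    Measure.pi (fun _ : ι ↦ gaussianReal 0 1) {x | 0 ≤ ∑ i, c i * x i ^ 2} ≤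
      ENNReal.ofReal (exp ((∑ i, (c i + c i ^ 2)) / 2)) := by
  have h_meas : Measurable fun x : ι → ℝ ↦ ENNReal.ofReal (exp ((∑ i, c i * x i ^ 2) / 2)) := by
    fun_prop
  refine (meas_le_lintegral₀ h_meas.aemeasurable fun x hx ↦ ?_).trans
    (lintegral_exp_half_sum_mul_sq_gaussian_le hc)
  exact ENNReal.one_le_ofReal.2 (one_le_exp (div_nonneg hx zero_le_two))

end Gaussian

section Sphere

variable {d : ℕ}

lemma l2norm_eq_norm_toLp (x : Fin d → ℝ) : l2norm x = ‖WithLp.toLp 2 x‖ := by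
  simp [l2norm, EuclideanSpace.norm_eq]

lemma l2norm_sq (x : Fin d → ℝ) : l2norm x ^ 2 = ∑ i, x i ^ 2 :=
  sq_sqrt (Finset.sum_nonneg fun _ _ ↦ sq_nonneg _)

lemma l2norm_smul_inv_smul (x : Fin d → ℝ) : l2norm x • (l2norm x)⁻¹ • x = x := by
  rcases eq_or_ne (l2norm x) 0 with h_zero | h_ne
  · have : x = 0 := by simpa [l2norm_eq_norm_toLp] using h_zero
    simp [this]
  · exact smul_inv_smul₀ h_ne x

lemma measurable_l2norm : Measurable (l2norm : (Fin d → ℝ) → ℝ) := by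
  unfold l2norm
  fun_prop

lemma sphereUniform_le_sum_mul_sq_le (c : Fin d → ℝ) (t : ℝ) :
    sphereUniform d {z | t ≤ ∑ i, c i * z i ^ 2} ≤
      Measure.pi (fun _ : Fin d ↦ gaussianReal 0 1) {x | 0 ≤ ∑ i, (c i - t) * x i ^ 2} := by
  have h_meas : Measurable fun x : Fin d → ℝ ↦ (l2norm x)⁻¹ • x :=
    measurable_l2norm.inv.smul measurable_id
  rw [sphereUniform, Measure.map_apply h_meas (measurableSet_le (by fun_prop) (by fun_prop))]
  refine measure_mono fun x hx ↦ ?_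
  set z := (l2norm x)⁻¹ • x with hz
  have h_scale (i : Fin d) : x i ^ 2 = l2norm x ^ 2 * z i ^ 2 := by
    rw [← mul_pow, ← smul_eq_mul, ← Pi.smul_apply, hz, l2norm_smul_inv_smul]
  calc
    0 ≤ l2norm x ^ 2 * (∑ i, c i * z i ^ 2 - t) := mul_nonneg (sq_nonneg _) (sub_nonneg.2 hx)
    _ = ∑ i, c i * x i ^ 2 - t * l2norm x ^ 2 := by
      simp only [h_scale, mul_sub, Finset.mul_sum, mul_left_comm, mul_comm]
    _ = ∑ i, (c i - t) * x i ^ 2 := by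
      simp only [l2norm_sq, Finset.mul_sum, ← Finset.sum_sub_distrib, sub_mul]

lemma sphereUniform_le_sum_mul_sq_le_exp {c : Fin d → ℝ} {t : ℝ} (h : ∀ i, c i - t ≤ 1 / 2) :
    sphereUniform d {z | t ≤ ∑ i, c i * z i ^ 2} ≤
      ENNReal.ofReal (exp ((∑ i, ((c i - t) + (c i - t) ^ 2)) / 2)) :=
  (sphereUniform_le_sum_mul_sq_le c t).trans (gaussian_sum_mul_sq_nonneg_le h)

lemma sphereUniform_le_mul_sum_sq_le_exp (s : Finset (Fin d)) {a t : ℝ} (h_mem : a - t ≤ 1 / 2)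
    (h_notMem : -t ≤ 1 / 2) :
    sphereUniform d {z | t ≤ a * ∑ i ∈ s, z i ^ 2} ≤
      ENNReal.ofReal (exp ((s.card * (a + a ^ 2 - 2 * a * t) + d * (t ^ 2 - t)) / 2)) := by
  let c (i : Fin d) : ℝ := if i ∈ s then a else 0
  have h_form (z : Fin d → ℝ) : ∑ i, c i * z i ^ 2 = a * ∑ i ∈ s, z i ^ 2 := by
    simp only [c, ite_mul, zero_mul, Finset.sum_ite_mem, Finset.univ_inter, Finset.mul_sum]
  have h_exponent : ∑ i, ((c i - t) + (c i - t) ^ 2) =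
      s.card * (a + a ^ 2 - 2 * a * t) + d * (t ^ 2 - t) := by
    have h_term (i : Fin d) : (c i - t) + (c i - t) ^ 2 =
        (if i ∈ s then a + a ^ 2 - 2 * a * t else 0) + (t ^ 2 - t) := by
      simp only [c]
      split_ifs <;> ring
    simp only [h_term, Finset.sum_add_distrib, Finset.sum_ite_mem, Finset.univ_inter,
      Finset.sum_const, nsmul_eq_mul, Finset.card_univ, Fintype.card_fin]
  have h_le (i : Fin d) : c i - t ≤ 1 / 2 := by
    simp only [c]
    split_ifs
    · exact h_mem
    · rwa [zero_sub]
  simpa only [h_form, h_exponent] using sphereUniform_le_sum_mul_sq_le_exp h_le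

lemma sphereUniform_sum_sq_tail_le (hd : 0 < d) (s : Finset (Fin d)) {δ : ℝ} (hδ : |δ| ≤ 1) :
    sphereUniform d {z | δ * ((1 + δ) * (s.card / d)) ≤ δ * ∑ i ∈ s, z i ^ 2} ≤
      ENNReal.ofReal (exp (-(δ ^ 2 * s.card) / 8)) := by
  obtain ⟨h_lower, h_upper⟩ := abs_le.1 hδ
  have hd_pos : (0 : ℝ) < d := by exact_mod_cast hd
  set p : ℝ := s.card / d
  have hp_nonneg : 0 ≤ p := by positivity
  have hp_le_one : p ≤ 1 := div_le_one_of_le₀ (by exact_mod_cast card_finset_fin_le s) hd_pos.le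
  have h_card : (s.card : ℝ) = d * p := (mul_div_cancel₀ _ hd_pos.ne').symm
  have h_one_sub_sq : 0 ≤ 1 - δ ^ 2 := sub_nonneg.2 ((sq_le_one_iff_abs_le_one δ).2 hδ)
  have h_mem : δ / 2 - δ / 2 * ((1 + δ) * p) ≤ 1 / 2 := by
    nlinarith
  have h_notMem : -(δ / 2 * ((1 + δ) * p)) ≤ 1 / 2 := by
    nlinarith
  have h_exponent :
      (s.card * (δ / 2 + (δ / 2) ^ 2 - 2 * (δ / 2) * (δ / 2 * ((1 + δ) * p))) +
          d * ((δ / 2 * ((1 + δ) * p)) ^ 2 - δ / 2 * ((1 + δ) * p))) / 2 ≤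
        -(δ ^ 2 * s.card) / 8 := by
    have h_gap : 0 ≤ d * (δ * p) ^ 2 * (1 - δ ^ 2) :=
      mul_nonneg (mul_nonneg hd_pos.le (sq_nonneg _)) h_one_sub_sq
    rw [h_card]
    linarith
  calc
    sphereUniform d {z | δ * ((1 + δ) * p) ≤ δ * ∑ i ∈ s, z i ^ 2}
    _ ≤ sphereUniform d {z | δ / 2 * ((1 + δ) * p) ≤ δ / 2 * ∑ i ∈ s, z i ^ 2} :=
      measure_mono fun z hz ↦ by
        rw [Set.mem_ofPred_eq] at hz ⊢
        linarith
    _ ≤ _ := sphereUniform_le_mul_sum_sq_le_exp s h_mem h_notMem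
    _ ≤ _ := by gcongr

theorem sphere_first_coords_concentration_general (hd : 0 < d) (s : Finset (Fin d)) {ε : ℝ}
    (hε₀ : 0 ≤ ε) (hε₂ : ε ≤ 2) :
    sphereUniform d {z | ε * s.card / (2 * d) ≤ |∑ i ∈ s, z i ^ 2 - (s.card : ℝ) / d|} ≤
      ENNReal.ofReal (2 * exp (-(ε ^ 2 * s.card) / 32)) := by
  let tail (δ : ℝ) : Set (Fin d → ℝ) := {z | δ * ((1 + δ) * (s.card / d)) ≤ δ * ∑ i ∈ s, z i ^ 2}
  have h_tail {δ : ℝ} (hδ : |δ| = ε / 2) :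
      sphereUniform d (tail δ) ≤ ENNReal.ofReal (exp (-(ε ^ 2 * s.card) / 32)) := by
    have h_exponent : -(δ ^ 2 * s.card) / 8 = -(ε ^ 2 * s.card) / 32 := by
      rw [← sq_abs, hδ]
      ring
    exact h_exponent ▸ sphereUniform_sum_sq_tail_le hd s (by linarith)
  have h_abs : |ε / 2| = ε / 2 := abs_of_nonneg (by positivity)
  have h_subset : {z : Fin d → ℝ | ε * s.card / (2 * d) ≤
      |∑ i ∈ s, z i ^ 2 - (s.card : ℝ) / d|} ⊆ tail (ε / 2) ∪ tail (-(ε / 2)) := by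
    intro z hz
    have h_dev : ε / 2 * (s.card / d) ≤ |∑ i ∈ s, z i ^ 2 - (s.card : ℝ) / d| := by
      rwa [div_mul_div_comm]
    refine (le_abs.1 h_dev).imp (fun h_upper ↦ ?_) fun h_lower ↦ ?_
    · have h_le : (1 + ε / 2) * (s.card / d) ≤ ∑ i ∈ s, z i ^ 2 := by linarith
      exact mul_le_mul_of_nonneg_left h_le (by positivity)
    · have h_le : ∑ i ∈ s, z i ^ 2 ≤ (1 + -(ε / 2)) * (s.card / d) := by linarith
      exact mul_le_mul_of_nonpos_left h_le (by linarith)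
  calc
    _ ≤ sphereUniform d (tail (ε / 2)) + sphereUniform d (tail (-(ε / 2))) :=
      (measure_mono h_subset).trans (measure_union_le _ _)
    _ ≤ ENNReal.ofReal (exp (-(ε ^ 2 * s.card) / 32)) +
        ENNReal.ofReal (exp (-(ε ^ 2 * s.card) / 32)) :=
      add_le_add (h_tail h_abs) (h_tail ((abs_neg _).trans h_abs))
    _ = ENNReal.ofReal (2 * exp (-(ε ^ 2 * s.card) / 32)) := by
      rw [← ENNReal.ofReal_add (exp_pos _).le (exp_pos _).le, two_mul]

end Sphere

/-- Concentration of the sum of squares of the first `k` coordinates of a uniformly random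
point on the sphere `S^{d-1}`. -/
theorem sphere_first_coords_concentration
    (d : ℕ) (hd : 1 ≤ d) (k : ℕ) (hk₁ : 1 ≤ k) (hk₂ : k ≤ d)
    (ε : ℝ) (hε₁ : 0 < ε) (hε₂ : ε < 1) :
    sphereUniform d {z : Fin d → ℝ |
        ε * k / (2 * d) ≤
          |∑ i ∈ Finset.univ.filter (fun i : Fin d => (i : ℕ) < k), z i ^ 2 - (k : ℝ) / d|} ≤
      ENNReal.ofReal (2 * Real.exp (-(ε ^ 2 * k) / 64)) := by
  have h_card : (Finset.univ.filter fun i : Fin d => (i : ℕ) < k).card = k := by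
    rw [Fin.card_filter_val_lt, min_eq_right hk₂]
  have h_general := h_card ▸ sphere_first_coords_concentration_general hd
    (Finset.univ.filter fun i : Fin d => (i : ℕ) < k) hε₁.le (by linarith)
  exact h_general.trans (by
    gcongr ENNReal.ofReal (2 * exp ?_)
    linarith [mul_nonneg (sq_nonneg ε) k.cast_nonneg])

end KacJL
end
end

section
/- Let d ≥ k ≥ 1 be integers, let a ∈ ℝ^d, and let φ : ℝ → ℝ be convex. Let S be a uniformly random subset of {1,…,d} of size k, and let i₁, …, i_k be i.i.d. uniform random indices in {1,…,d} (repetitions allowed). Then E[ φ( Σ_{i∈S} a_i ) ] ≤ E[ φ( Σ_{j=1}^k a_{i_j} ) ]. In particular, for every p ≥ 1 and every c ∈ ℝ, E| Σ_{i∈S} a_i − c |^p ≤ E| Σ_{j=1}^k a_{i_j} − c |^p. -/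
/-!
Extend the range of a map `f : κ → ι` to a set `A` with `#A = #κ` and average over the permutations
`τ` of `A`: each `τ (f j)` is uniform on `A`, so the mean of `∑ j, a (τ (f j))` is `∑ i ∈ A, a i`,
and Jensen's inequality bounds `φ (∑ i ∈ A, a i)` by the mean of `φ (∑ j, a (τ (f j)))`.  Apply this
to `a ∘ σ` for a uniform permutation `σ` of `ι`: then `σ • A` is a uniform subset, `σ * τ` is again
a uniform permutation, and averaging over `f` makes `(σ * τ) ∘ f` a uniform map.
-/

noncomputable section

open scoped BigOperators

namespace KacJL

open Finset
open scoped Pointwise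

section Convexity

lemma map_expect_le_of_convexOn {𝕜 E α : Type*} [Field 𝕜] [LinearOrder 𝕜] [IsStrictOrderedRing 𝕜]
    [AddCommGroup E] [Module 𝕜 E] [Module ℚ≥0 E] {s : Set E} {φ : E → 𝕜} (hφ : ConvexOn 𝕜 s φ)
    {t : Finset α} (ht : t.Nonempty) {p : α → E} (hp : ∀ i ∈ t, p i ∈ s) :
    φ (𝔼 i ∈ t, p i) ≤ 𝔼 i ∈ t, φ (p i) := by
  have weights_sum : ∑ _i ∈ t, (#t : 𝕜)⁻¹ = 1 := by
    rw [sum_const, nsmul_eq_mul, mul_inv_cancel₀ (Nat.cast_ne_zero.mpr ht.card_ne_zero)]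
  have jensen := hφ.map_sum_le (fun _ _ ↦ by positivity) weights_sum hp
  simpa only [expect, ← NNRat.cast_smul_eq_nnqsmul 𝕜, NNRat.cast_inv, NNRat.cast_natCast,
    smul_sum] using jensen

lemma convexOn_rpow_of_nonneg {E : Type*} [AddCommGroup E] [Module ℝ E] {s : Set E} {f : E → ℝ}
    (hf : ConvexOn ℝ s f) (hf₀ : ∀ x ∈ s, 0 ≤ f x) {p : ℝ} (hp : 1 ≤ p) :
    ConvexOn ℝ s fun x ↦ f x ^ p := by
  refine ⟨hf.1, fun x hx y hy u v hu hv huv ↦ ?_⟩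
  calc f (u • x + v • y) ^ p
      ≤ (u • f x + v • f y) ^ p :=
        Real.rpow_le_rpow (hf₀ _ (hf.1 hx hy hu hv huv)) (hf.2 hx hy hu hv huv) (by linarith)
    _ ≤ u • f x ^ p + v • f y ^ p := (convexOn_rpow hp).2 (hf₀ x hx) (hf₀ y hy) hu hv huv

end Convexity

section GroupAverage

variable (G : Type*) {X M : Type*} [Group G] [Fintype G] [MulAction G X] [Fintype X]
  [AddCommMonoid M] [Module ℚ≥0 M]

lemma expect_expect_smul (F : X → M) : 𝔼 x, 𝔼 g : G, F (g • x) = 𝔼 x, F x := by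
  have expect_smul (g : G) : 𝔼 x, F (g • x) = 𝔼 x, F x :=
    Fintype.expect_equiv (MulAction.toPerm g) _ _ fun _ ↦ rfl
  simp only [expect_comm (univ : Finset X), expect_smul, Fintype.expect_const]

variable [MulAction.IsPretransitive G X]

lemma expect_smul_of_isPretransitive (F : X → M) (x : X) : 𝔼 g : G, F (g • x) = 𝔼 y, F y := by
  have orbit_indep (y : X) : 𝔼 g : G, F (g • y) = 𝔼 g : G, F (g • x) := by
    obtain ⟨h, rfl⟩ := MulAction.exists_smul_eq G x y
    exact Fintype.expect_equiv (Equiv.mulRight h) _ _ fun g ↦ by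
      rw [Equiv.coe_mulRight, mul_smul]
  have : Nonempty X := ⟨x⟩
  rw [← expect_expect_smul G F, expect_congr rfl fun y _ ↦ orbit_indep y, Fintype.expect_const]

lemma expect_sum_smul_of_card_eq {κ : Type*} [Fintype κ] (hκ : Fintype.card κ = Fintype.card X)
    (b : X → M) (f : κ → X) : 𝔼 g : G, ∑ j, b (g • f j) = ∑ x, b x := by
  calc 𝔼 g : G, ∑ j, b (g • f j)
      = ∑ _j : κ, 𝔼 x, b x := by
        simp only [expect_sum_comm, expect_smul_of_isPretransitive G b]
    _ = ∑ x, b x := by rw [sum_const, card_univ, hκ, Fintype.card_smul_expect]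

end GroupAverage

lemma expect_perm_smul_finset {ι M : Type*} [Fintype ι] [DecidableEq ι] [AddCommMonoid M]
    [Module ℚ≥0 M] (F : Finset ι → M) (A : Finset ι) :
    𝔼 σ : Equiv.Perm ι, F (σ • A) = 𝔼 B ∈ powersetCard #A univ, F B := by
  have := Set.powersetCard.isPretransitive (α := ι) (n := #A)
  calc 𝔼 σ : Equiv.Perm ι, F (σ • A)
      = 𝔼 B : Set.powersetCard ι #A, F B :=
        expect_smul_of_isPretransitive (Equiv.Perm ι) (fun B : Set.powersetCard ι #A ↦ F B) ⟨A, rfl⟩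
    _ = 𝔼 B ∈ powersetCard #A univ, F B :=
        expect_bij (fun B _ ↦ B) (fun B _ ↦ mem_powersetCard_univ.mpr B.2) (fun _ _ ↦ rfl)
          (fun _ _ _ _ ↦ Subtype.ext)
          fun B hB ↦ ⟨⟨B, mem_powersetCard_univ.mp hB⟩, mem_univ _, rfl⟩

section Sampling

variable {𝕜 E ι κ : Type*} [Field 𝕜] [LinearOrder 𝕜] [IsStrictOrderedRing 𝕜]
  [AddCommGroup E] [Module 𝕜 E] [Fintype κ] {s : Set E} {φ : E → 𝕜}

lemma map_sum_le_expect_perm {α : Type*} [Fintype α] [DecidableEq α] (hφ : ConvexOn 𝕜 s φ)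
    (hκ : Fintype.card κ = Fintype.card α) (b : α → E) (f : κ → α)
    (hs : ∀ τ : Equiv.Perm α, ∑ j, b (τ (f j)) ∈ s) :
    φ (∑ i, b i) ≤ 𝔼 τ : Equiv.Perm α, φ (∑ j, b (τ (f j))) := by
  let _ : Module ℚ≥0 E := Module.compHom E (algebraMap ℚ≥0 𝕜)
  rw [← expect_sum_smul_of_card_eq (Equiv.Perm α) hκ b f]
  exact map_expect_le_of_convexOn hφ univ_nonempty fun τ _ ↦ hs τ

variable [Fintype ι]

lemma expect_subset_sum_le_expect_perm [DecidableEq ι] (hφ : ConvexOn 𝕜 s φ) (a : ι → E) (f : κ → ι)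
    {A : Finset ι} (hfA : ∀ j, f j ∈ A) (hA : #A = Fintype.card κ)
    (hs : ∀ σ : Equiv.Perm ι, ∑ j, a (σ (f j)) ∈ s) :
    𝔼 B ∈ powersetCard #A univ, φ (∑ i ∈ B, a i) ≤
      𝔼 σ : Equiv.Perm ι, φ (∑ j, a (σ (f j))) := by
  let F (σ : Equiv.Perm ι) : 𝕜 := φ (∑ j, a (σ (f j)))
  have apply_ofSubtype (σ : Equiv.Perm ι) (τ : Equiv.Perm A) (j : κ) :
      σ (τ ⟨f j, hfA j⟩) = (σ * τ.ofSubtype) (f j) := by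
    rw [Equiv.Perm.mul_apply, Equiv.Perm.ofSubtype_apply_of_mem τ (hfA j)]
  have jensen (σ : Equiv.Perm ι) :
      φ (∑ i ∈ σ • A, a i) ≤ 𝔼 τ : Equiv.Perm A, F (σ * τ.ofSubtype) := by
    have := map_sum_le_expect_perm hφ (hA.symm.trans (Fintype.card_coe A).symm)
      (fun i : A ↦ a (σ i)) (fun j ↦ ⟨f j, hfA j⟩) fun τ ↦ by
        simpa only [apply_ofSubtype] using hs (σ * τ.ofSubtype)
    simpa only [F, apply_ofSubtype, sum_coe_sort A fun i ↦ a (σ i), smul_finset_def,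
      Equiv.Perm.smul_def, sum_image σ.injective.injOn] using this
  have translate (τ : Equiv.Perm A) :
      𝔼 σ : Equiv.Perm ι, F (σ * τ.ofSubtype) = 𝔼 σ, F σ :=
    Fintype.expect_equiv (Equiv.mulRight τ.ofSubtype) _ _ fun _ ↦ rfl
  calc 𝔼 B ∈ powersetCard #A univ, φ (∑ i ∈ B, a i)
      = 𝔼 σ : Equiv.Perm ι, φ (∑ i ∈ σ • A, a i) := (expect_perm_smul_finset _ A).symm
    _ ≤ 𝔼 σ : Equiv.Perm ι, 𝔼 τ : Equiv.Perm A, F (σ * τ.ofSubtype) :=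
        expect_le_expect fun σ _ ↦ jensen σ
    _ = 𝔼 σ, F σ := by
        rw [expect_comm, expect_congr rfl fun τ _ ↦ translate τ, Fintype.expect_const]

theorem subset_sum_le_iid_sum_of_convex_general [DecidableEq κ] (hφ : ConvexOn 𝕜 s φ)
    (hκι : Fintype.card κ ≤ Fintype.card ι) (a : ι → E) (hs : ∀ f : κ → ι, ∑ j, a (f j) ∈ s) :
    𝔼 A ∈ powersetCard (Fintype.card κ) univ, φ (∑ i ∈ A, a i) ≤
      𝔼 f : κ → ι, φ (∑ j, a (f j)) := by
  classical
  have expect_le_expect_perm (f : κ → ι) :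
      𝔼 A ∈ powersetCard (Fintype.card κ) univ, φ (∑ i ∈ A, a i) ≤
        𝔼 σ : Equiv.Perm ι, φ (∑ j, a ((σ • f) j)) := by
    obtain ⟨A, hfA, hA⟩ := exists_superset_card_eq (card_image_le (s := univ) (f := f)) hκι
    rw [card_univ] at hA
    rw [← hA]
    exact expect_subset_sum_le_expect_perm hφ a f
      (fun j ↦ hfA (mem_image_of_mem f (mem_univ j))) hA fun σ ↦ hs (σ ∘ f)
  have : Nonempty (κ → ι) := (Function.Embedding.nonempty_of_card_le hκι).map (⇑)
  calc 𝔼 A ∈ powersetCard (Fintype.card κ) univ, φ (∑ i ∈ A, a i)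
      ≤ 𝔼 f : κ → ι, 𝔼 σ : Equiv.Perm ι, φ (∑ j, a ((σ • f) j)) :=
        le_expect univ_nonempty fun f _ ↦ expect_le_expect_perm f
    _ = 𝔼 f : κ → ι, φ (∑ j, a (f j)) :=
        expect_expect_smul (Equiv.Perm ι) fun f : κ → ι ↦ φ (∑ j, a (f j))

end Sampling

/-- Comparing sampling without replacement to sampling with replacement: for a convex
function `φ`, the average of `φ` of the sum of a uniformly random `k`-element subset of the
`a_i` is at most the average of `φ` of the sum of `k` i.i.d. uniformly chosen entries
(with repetitions allowed).  In particular the same holds for the `p`-th moments about any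
point `c`. -/
theorem subset_sum_le_iid_sum_of_convex
    (d k : ℕ) (hk₁ : 1 ≤ k) (hk₂ : k ≤ d) (a : Fin d → ℝ)
    (φ : ℝ → ℝ) (hφ : ConvexOn ℝ Set.univ φ) :
    (((d.choose k : ℕ) : ℝ))⁻¹ *
        ∑ A ∈ Finset.univ.filter (fun A : Finset (Fin d) => A.card = k),
          φ (∑ i ∈ A, a i) ≤
      (((d : ℝ) ^ k))⁻¹ * ∑ f : Fin k → Fin d, φ (∑ j, a (f j)) ∧
    ∀ p : ℝ, 1 ≤ p → ∀ c : ℝ,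
      (((d.choose k : ℕ) : ℝ))⁻¹ *
          ∑ A ∈ Finset.univ.filter (fun A : Finset (Fin d) => A.card = k),
            |(∑ i ∈ A, a i) - c| ^ p ≤
        (((d : ℝ) ^ k))⁻¹ * ∑ f : Fin k → Fin d, |(∑ j, a (f j)) - c| ^ p := by
  have ineq (ψ : ℝ → ℝ) (hψ : ConvexOn ℝ Set.univ ψ) := subset_sum_le_iid_sum_of_convex_general
    (κ := Fin k) hψ (by simpa only [Fintype.card_fin] using hk₂) a fun _ ↦ Set.mem_univ _
  simp only [expect_eq_sum_div_card, card_powersetCard, card_univ, Fintype.card_fun,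
    Fintype.card_fin, Nat.cast_pow, div_eq_inv_mul] at ineq
  simp only [← univ_filter_card_eq] at ineq
  exact ⟨ineq φ hφ, fun p hp c ↦ ineq _ <|
    convexOn_rpow_of_nonneg (convexOn_univ_dist c) (fun _ _ ↦ dist_nonneg) hp⟩

end KacJL
end
end
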